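/- arXiv:2010.06092 — 6 statements merged into one kernel-verified Lean document; each statement's English description precedes it below -/
import Mathlib

section
/- (Galilean invariant version) For every fixed velocity w ∈ ℝⁿ and every bounded subset D ⊆ ℝⁿ: (i) ∫₀^∞ ∫_{ℝⁿ} ∫_{D+tw} f(x,ξ,t)|ξ−w|² dx dξ dt < ∞, and (ii) for every v > 0, ∫₀^∞ ∫_{{ξ : |ξ−w| ≥ v}} ∫_{D+tw} f(x,ξ,t) dx dξ dt < ∞, where D+tw = {y+tw : y ∈ D}. -/
open MeasureTheory Real Filter Set
open scoped RealInnerProductSpace ENNReal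

noncomputable section

/-!
A Morawetz estimate in the frame moving with velocity `w`. Write `η = ξ - w`, `z = x - tw` and
`ψ(z) = √(1 + |z|²)`. Along a characteristic `η` is constant and `z` moves with velocity `η`, so the
multiplier `1 + |η|² - η · ∇ψ(z)` (`morawetzWeight`) decreases exactly at the rate `D²ψ(z)(η, η)`
(`hessForm`). It is nonnegative because `|∇ψ| ≤ 1`, and it is bounded by `2(1 + |η|²)`.

Integrating `f` times the multiplier by parts along a characteristic (`parts_along`) and dropping
the nonnegative term at the final time leaves
`∫₀ᵀ f D²ψ(η, η) ds ≤ (f · multiplier at time 0) + ∫₀ᵀ g · multiplier ds`.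
At each time and position the multiplier is a combination of `1`, `ξ` and `|ξ|²`, hence the
interaction term vanishes after integration over phase space (`integral_interaction_eq_zero`). This
bounds `∫₀ᵀ ∬ f D²ψ(η, η)` uniformly in `T` (`morawetz_char`). Including `1 + |η|²` in the
multiplier makes a separate use of the conservation laws unnecessary.

By Cauchy–Schwarz `D²ψ(z)(η, η) ≥ |η|² (1 + |z|²)^{-3/2}` (`hessForm_lower`), which is at least a
constant times `|η|²` for `z` in the bounded set `D`. This gives (i), and (ii) follows
since `1 ≤ |η|² / v²` where `|η| ≥ v`.
-/

local notation "𝔼" n => EuclideanSpace ℝ (Fin n)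

/-- The Morawetz multiplier `1 + |η|² - η · ∇ψ(z)` for `ψ(z) = √(1 + |z|²)`. The part `1 + |η|²`
is transported freely; it makes the multiplier nonnegative. -/
def morawetzWeight {n : ℕ} (z η : 𝔼 n) : ℝ :=
  1 + ‖η‖ ^ 2 - ⟪η, z⟫ / √(1 + ‖z‖ ^ 2)

/-- The Hessian form `D²ψ(z)(η, η)` of `ψ(z) = √(1 + |z|²)`. -/
def hessForm {n : ℕ} (z η : 𝔼 n) : ℝ :=
  (‖η‖ ^ 2 * (1 + ‖z‖ ^ 2) - ⟪η, z⟫ ^ 2) / ((1 + ‖z‖ ^ 2) * √(1 + ‖z‖ ^ 2))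

/-! ### The multiplier along free transport -/

lemma abs_inner_div_le {n : ℕ} (z η : 𝔼 n) : |⟪η, z⟫ / √(1 + ‖z‖ ^ 2)| ≤ ‖η‖ := by
  have hs : 0 < √(1 + ‖z‖ ^ 2) := by positivity
  rw [abs_div, abs_of_pos hs, div_le_iff₀ hs]
  refine (abs_real_inner_le_norm η z).trans ?_
  gcongr
  exact Real.le_sqrt_of_sq_le (by linarith)

lemma morawetzWeight_nonneg {n : ℕ} (z η : 𝔼 n) : 0 ≤ morawetzWeight z η := by
  have := abs_le.1 (abs_inner_div_le z η)
  unfold morawetzWeight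
  nlinarith [sq_nonneg (‖η‖ - 1)]

lemma morawetzWeight_le {n : ℕ} (z η : 𝔼 n) : morawetzWeight z η ≤ 2 * (1 + ‖η‖ ^ 2) := by
  have := abs_le.1 (abs_inner_div_le z η)
  unfold morawetzWeight
  nlinarith [sq_nonneg (‖η‖ - 1)]

lemma morawetzWeight_sub_le {n : ℕ} (z ξ w x : 𝔼 n) :
    morawetzWeight z (ξ - w) ≤ 4 * (1 + ‖w‖ ^ 2) * (1 + ‖x‖ ^ 2 + ‖ξ‖ ^ 2) := by
  have h1 := morawetzWeight_le z (ξ - w)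
  have h2 : ‖ξ - w‖ ^ 2 ≤ 2 * ‖ξ‖ ^ 2 + 2 * ‖w‖ ^ 2 := by
    have := norm_sub_le ξ w
    nlinarith [norm_nonneg (ξ - w), sq_nonneg (‖ξ‖ - ‖w‖)]
  have h3 : 0 ≤ ‖w‖ ^ 2 * ‖ξ‖ ^ 2 := by positivity
  have h4 : 0 ≤ ‖w‖ ^ 2 * ‖x‖ ^ 2 := by positivity
  nlinarith [sq_nonneg ‖x‖, sq_nonneg ‖w‖, sq_nonneg ‖ξ‖]

lemma hessForm_lower {n : ℕ} (z η : 𝔼 n) :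
    ‖η‖ ^ 2 / ((1 + ‖z‖ ^ 2) * √(1 + ‖z‖ ^ 2)) ≤ hessForm z η := by
  unfold hessForm
  gcongr
  have h := abs_real_inner_le_norm η z
  have : ⟪η, z⟫ ^ 2 ≤ (‖η‖ * ‖z‖) ^ 2 := sq_le_sq' (abs_le.1 h).1 (abs_le.1 h).2
  nlinarith

lemma hessForm_nonneg {n : ℕ} (z η : 𝔼 n) : 0 ≤ hessForm z η :=
  le_trans (by positivity) (hessForm_lower z η)

lemma continuous_morawetzWeight {n : ℕ} :
    Continuous fun p : (𝔼 n) × (𝔼 n) => morawetzWeight p.1 p.2 := by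
  unfold morawetzWeight
  have : ∀ p : (𝔼 n) × (𝔼 n), √(1 + ‖p.1‖ ^ 2) ≠ 0 := fun p => by positivity
  fun_prop (disch := assumption)

lemma continuous_hessForm {n : ℕ} :
    Continuous fun p : (𝔼 n) × (𝔼 n) => hessForm p.1 p.2 := by
  unfold hessForm
  have : ∀ p : (𝔼 n) × (𝔼 n), (1 + ‖p.1‖ ^ 2) * √(1 + ‖p.1‖ ^ 2) ≠ 0 := fun p => by positivity
  fun_prop (disch := assumption)

/-- Along free transport the multiplier decreases at rate `D²ψ(η, η)`. -/
lemma hasDerivAt_morawetzWeight {n : ℕ} (x η : 𝔼 n) (s : ℝ) :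
    HasDerivAt (fun s : ℝ => morawetzWeight (x + s • η) η) (-hessForm (x + s • η) η) s := by
  have hz : HasDerivAt (fun s : ℝ => x + s • η) η s := by
    simpa using ((hasDerivAt_id s).smul_const η).const_add x
  have hq : HasDerivAt (fun s : ℝ => 1 + ‖x + s • η‖ ^ 2) (2 * ⟪x + s • η, η⟫) s :=
    hz.norm_sq.const_add 1
  have hp : HasDerivAt (fun s : ℝ => ⟪η, x + s • η⟫) (‖η‖ ^ 2) s := by
    have := (hasDerivAt_const s η).inner ℝ hz
    simpa using this
  have hq0 : (0:ℝ) < 1 + ‖x + s • η‖ ^ 2 := by positivity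
  have hs0 : 0 < √(1 + ‖x + s • η‖ ^ 2) := by positivity
  have hr := hq.sqrt hq0.ne'
  have := ((hp.div hr hs0.ne').const_sub (1 + ‖η‖ ^ 2))
  refine this.congr_deriv ?_
  unfold hessForm
  rw [real_inner_comm]
  have e := Real.sq_sqrt hq0.le
  rw [← e]
  set r := √(1 + ‖x + s • η‖ ^ 2)
  rw [Real.sqrt_sq hs0.le]
  field_simp

/-! ### Integration by parts along a characteristic -/

/-- Integration by parts for `F = F 0 + ∫ G` with merely integrable `G`, against a `C¹` function
`H` whose derivative is `-K`. -/
lemma parts_along {T : ℝ} (hT : 0 ≤ T) {F G H K : ℝ → ℝ}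
    (hG : IntegrableOn G (Icc 0 T))
    (hF : ∀ t, 0 ≤ t → F t = F 0 + ∫ s in Icc (0:ℝ) t, G s)
    (hK : Continuous K) (hH : ∀ s, HasDerivAt H (-K s) s) :
    ∫ s in Icc (0:ℝ) T, F s * K s =
      F 0 * H 0 - F T * H T + ∫ s in Icc (0:ℝ) T, G s * H s := by
  have hGi : IntervalIntegrable G volume 0 T := by
    rw [intervalIntegrable_iff_integrableOn_Icc_of_le hT]; exact hG
  have hP := hGi.absolutelyContinuousOnInterval_intervalIntegral (c := 0) (by simp)
  have hd : deriv H = fun s => -K s := funext fun s => (hH s).deriv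
  have hHc : ContDiff ℝ 1 H := by
    rw [contDiff_one_iff_deriv, hd]
    exact ⟨fun s => (hH s).differentiableAt, hK.neg⟩
  have hHa : AbsolutelyContinuousOnInterval H 0 T :=
    hHc.contDiffOn.absolutelyContinuousOnInterval
  have key := hP.integral_mul_deriv_eq_deriv_mul hHa
  have e1 : ∫ x in (0:ℝ)..T, deriv (fun x => ∫ v in (0:ℝ)..x, G v) x * H x =
      ∫ x in (0:ℝ)..T, G x * H x := by
    apply intervalIntegral.integral_congr_ae
    filter_upwards [hGi.ae_hasDerivAt_integral] with x hx hx'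
    rw [(hx (uIoc_subset_uIcc hx') 0 (by simp)).deriv]
  have e2 : ∫ s in (0:ℝ)..T, K s = H 0 - H T := by
    have := intervalIntegral.integral_eq_sub_of_hasDerivAt (f := H) (f' := fun s => -K s)
      (a := 0) (b := T) (fun s _ => hH s) (hK.neg.intervalIntegrable _ _)
    rw [intervalIntegral.integral_neg] at this
    linarith
  have hPc : ContinuousOn (fun x => ∫ v in (0:ℝ)..x, G v) (uIcc 0 T) := hP.continuousOn
  have hFP : ∀ t, 0 ≤ t → F t = F 0 + ∫ v in (0:ℝ)..t, G v := fun t ht => by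
    rw [hF t ht, intervalIntegral.integral_of_le ht, integral_Icc_eq_integral_Ioc]
  rw [integral_Icc_eq_integral_Ioc, integral_Icc_eq_integral_Ioc,
    ← intervalIntegral.integral_of_le hT, ← intervalIntegral.integral_of_le hT]
  have e3 : ∫ s in (0:ℝ)..T, F s * K s =
      ∫ s in (0:ℝ)..T, (F 0 * K s - (∫ v in (0:ℝ)..s, G v) * deriv H s) := by
    apply intervalIntegral.integral_congr
    intro s hs
    rw [uIcc_of_le hT] at hs
    simp only [hd]
    rw [hFP s hs.1]
    ring
  rw [e3, intervalIntegral.integral_sub, key, e1, intervalIntegral.integral_const_mul, e2,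
    hFP T hT]
  · simp
    ring
  · exact (hK.const_mul _).intervalIntegrable _ _
  · rw [hd]
    exact (hPc.mul hK.neg.continuousOn).intervalIntegrable

/-! ### Free transport preserves Lebesgue measure -/

/-- The free flow `(x, ξ) ↦ (x + sξ, ξ)`. -/
def shear {n : ℕ} (s : ℝ) : ((𝔼 n) × (𝔼 n)) ≃ᵐ ((𝔼 n) × (𝔼 n)) where
  toFun p := (p.1 + s • p.2, p.2)
  invFun p := (p.1 - s • p.2, p.2)
  left_inv p := by simp
  right_inv p := by simp
  measurable_toFun := by simp only [Equiv.coe_fn_mk]; fun_prop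
  measurable_invFun := by simp only [Equiv.coe_fn_symm_mk]; fun_prop

lemma measurePreserving_shear {n : ℕ} (s : ℝ) :
    MeasurePreserving (shear (n := n) s) volume volume := by
  have h : MeasurePreserving
      (fun p : (𝔼 n) × (𝔼 n) => (p.1, p.2 + s • p.1)) (volume.prod volume)
      (volume.prod volume) := by
    refine (MeasurePreserving.id volume).skew_product (g := fun a c => c + s • a) ?_ ?_
    · fun_prop
    · exact ae_of_all _ fun a => map_add_right_eq_self volume (s • a)
  have h1 : MeasurePreserving (Prod.swap : (𝔼 n) × (𝔼 n) → (𝔼 n) × (𝔼 n))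
      (volume.prod volume) (volume.prod volume) := Measure.measurePreserving_swap
  exact (h1.comp h).comp h1

/-! ### The interaction does not see the multiplier -/

lemma integral_meso_weight {n : ℕ} (G : (𝔼 n) → ℝ) (h0 : Integrable G ∧ ∫ ξ, G ξ = 0)
    (h1 : Integrable (fun ξ => G ξ • ξ) ∧ ∫ ξ, G ξ • ξ = 0)
    (h2 : Integrable (fun ξ => G ξ * ‖ξ‖ ^ 2) ∧ ∫ ξ, G ξ * ‖ξ‖ ^ 2 = 0) (z w : 𝔼 n) :
    ∫ ξ, G ξ * morawetzWeight z (ξ - w) = 0 := by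
  set r := √(1 + ‖z‖ ^ 2)
  set V : 𝔼 n := (2:ℝ) • w + r⁻¹ • z with hV
  have e : (fun ξ => G ξ * morawetzWeight z (ξ - w)) = fun ξ =>
      (G ξ * (1 + ‖w‖ ^ 2 + ⟪w, z⟫ / r) + G ξ * ‖ξ‖ ^ 2) - ⟪V, G ξ • ξ⟫ := by
    funext ξ
    unfold morawetzWeight
    rw [norm_sub_sq_real, inner_sub_left, inner_smul_right, hV, inner_add_left,
      real_inner_smul_left, real_inner_smul_left, real_inner_comm w ξ, real_inner_comm z ξ]
    ring
  have hi : Integrable fun ξ => ⟪V, G ξ • ξ⟫ := h1.1.const_inner V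
  have hin : ∫ ξ, ⟪V, G ξ • ξ⟫ = 0 := by
    rw [integral_inner h1.1, h1.2, inner_zero_right]
  have ha : Integrable fun ξ => G ξ * (1 + ‖w‖ ^ 2 + ⟪w, z⟫ / r) + G ξ * ‖ξ‖ ^ 2 :=
    (h0.1.mul_const _).add h2.1
  rw [e, integral_sub ha hi, integral_add (h0.1.mul_const _) h2.1,
    integral_mul_const, h0.2, h2.2, hin]
  simp

/-- The interaction contributes nothing to the balance of the Morawetz multiplier, once the
integral over characteristics is rewritten, at each time, as an integral over phase space. -/
lemma integral_interaction_eq_zero {n : ℕ} (g : (𝔼 n) → (𝔼 n) → ℝ → ℝ)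
    (hmeso_mass : ∀ (t : ℝ), 0 ≤ t → ∀ x, Integrable (fun ξ => g x ξ t) ∧ ∫ ξ, g x ξ t = 0)
    (hmeso_mom : ∀ (t : ℝ), 0 ≤ t → ∀ x, Integrable (fun ξ => g x ξ t • ξ) ∧
      ∫ ξ, g x ξ t • ξ = (0 : 𝔼 n))
    (hmeso_en : ∀ (t : ℝ), 0 ≤ t → ∀ x, Integrable (fun ξ => g x ξ t * ‖ξ‖ ^ 2) ∧
      ∫ ξ, g x ξ t * ‖ξ‖ ^ 2 = 0) (w : 𝔼 n) (T : ℝ)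
    (hint : Integrable (fun q : ((𝔼 n) × (𝔼 n)) × ℝ =>
        g (q.1.1 + q.2 • q.1.2) q.1.2 q.2 *
          morawetzWeight (q.1.1 + q.2 • (q.1.2 - w)) (q.1.2 - w))
        ((volume : Measure ((𝔼 n) × (𝔼 n))).prod (volume.restrict (Icc (0:ℝ) T)))) :
    ∫ p : (𝔼 n) × (𝔼 n), ∫ s in Icc (0:ℝ) T, g (p.1 + s • p.2) p.2 s *
      morawetzWeight (p.1 + s • (p.2 - w)) (p.2 - w) = 0 := by
  rw [integral_integral_swap hint]
  apply integral_eq_zero_of_ae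
  filter_upwards [hint.prod_left_ae, ae_restrict_mem measurableSet_Icc] with s hs hs0
  set Φ : (𝔼 n) × (𝔼 n) → ℝ := fun p =>
    g p.1 p.2 s * morawetzWeight (p.1 - s • w) (p.2 - w) with hΦ
  have e : (fun p : (𝔼 n) × (𝔼 n) => g (p.1 + s • p.2) p.2 s *
      morawetzWeight (p.1 + s • (p.2 - w)) (p.2 - w)) = Φ ∘ shear s := by
    funext p
    simp [hΦ, shear, smul_sub, add_sub_assoc]
  have hΦi : Integrable Φ := by
    rw [← (measurePreserving_shear s).integrable_comp_emb (shear s).measurableEmbedding, ← e]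
    exact hs
  have : ∫ p, (Φ ∘ shear s) p = ∫ p, Φ p :=
    (measurePreserving_shear s).integral_comp (shear s).measurableEmbedding Φ
  simp only [Pi.zero_apply]
  rw [e, this, Measure.volume_eq_prod, integral_prod _ hΦi]
  apply integral_eq_zero_of_ae
  refine ae_of_all _ fun y => ?_
  exact integral_meso_weight (fun ξ => g y ξ s) (hmeso_mass s hs0.1 y) (hmeso_mom s hs0.1 y)
    (hmeso_en s hs0.1 y) (y - s • w) w

/-! ### The Morawetz estimate -/

set_option maxHeartbeats 1000000 in
/-- Morawetz estimate on `[0, T]` in characteristic coordinates; the bound is independent of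
`T`. -/
lemma morawetz_char {n : ℕ} (f g : (𝔼 n) → (𝔼 n) → ℝ → ℝ)
    (hf_nonneg : ∀ x ξ t, (0:ℝ) ≤ t → 0 ≤ f x ξ t)
    (hf_cont : Continuous fun p : ((𝔼 n) × (𝔼 n)) × ℝ => f p.1.1 p.1.2 p.2)
    (hg_meas : Measurable fun p : ((𝔼 n) × (𝔼 n)) × ℝ => g p.1.1 p.1.2 p.2)
    (h_mild : ∀ (x ξ : 𝔼 n) (t : ℝ), 0 ≤ t →
      f (x + t • ξ) ξ t = f x ξ 0 + ∫ s in Icc (0:ℝ) t, g (x + s • ξ) ξ s)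
    (hmeso_mass : ∀ (t : ℝ), 0 ≤ t → ∀ x, Integrable (fun ξ => g x ξ t) ∧ ∫ ξ, g x ξ t = 0)
    (hmeso_mom : ∀ (t : ℝ), 0 ≤ t → ∀ x, Integrable (fun ξ => g x ξ t • ξ) ∧
      ∫ ξ, g x ξ t • ξ = (0 : 𝔼 n))
    (hmeso_en : ∀ (t : ℝ), 0 ≤ t → ∀ x, Integrable (fun ξ => g x ξ t * ‖ξ‖ ^ 2) ∧
      ∫ ξ, g x ξ t * ‖ξ‖ ^ 2 = 0)
    (hf_int : Integrable (fun p : (𝔼 n) × (𝔼 n) =>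
        f p.1 p.2 0 * (1 + ‖p.1‖ ^ 2 + ‖p.2‖ ^ 2)))
    {T : ℝ} (hT : 0 < T)
    (hg_char_int : Integrable (fun q : ((𝔼 n) × (𝔼 n)) × ℝ =>
        |g (q.1.1 + q.2 • q.1.2) q.1.2 q.2| * (1 + ‖q.1.1‖ ^ 2 + ‖q.1.2‖ ^ 2))
        ((volume : Measure ((𝔼 n) × (𝔼 n))).prod (volume.restrict (Icc (0:ℝ) T))))
    (w : 𝔼 n) :
    ∫⁻ p : (𝔼 n) × (𝔼 n), ∫⁻ s in Icc (0:ℝ) T, ENNReal.ofReal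
        (f (p.1 + s • p.2) p.2 s * hessForm (p.1 + s • (p.2 - w)) (p.2 - w)) ≤
      ENNReal.ofReal (∫ p : (𝔼 n) × (𝔼 n), f p.1 p.2 0 * morawetzWeight p.1 (p.2 - w)) := by
  have hg' : Measurable fun q : ((𝔼 n) × (𝔼 n)) × ℝ => g (q.1.1 + q.2 • q.1.2) q.1.2 q.2 := by
    have hm : Measurable fun q : ((𝔼 n) × (𝔼 n)) × ℝ =>
        ((q.1.1 + q.2 • q.1.2, q.1.2), q.2) := by fun_prop
    exact hg_meas.comp hm
  have hw' : Continuous fun q : ((𝔼 n) × (𝔼 n)) × ℝ =>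
      morawetzWeight (q.1.1 + q.2 • (q.1.2 - w)) (q.1.2 - w) :=
    continuous_morawetzWeight.comp (f := fun q : ((𝔼 n) × (𝔼 n)) × ℝ =>
      (q.1.1 + q.2 • (q.1.2 - w), q.1.2 - w)) (by fun_prop)
  have hint : Integrable (fun q : ((𝔼 n) × (𝔼 n)) × ℝ =>
        g (q.1.1 + q.2 • q.1.2) q.1.2 q.2 *
          morawetzWeight (q.1.1 + q.2 • (q.1.2 - w)) (q.1.2 - w))
        ((volume : Measure ((𝔼 n) × (𝔼 n))).prod (volume.restrict (Icc (0:ℝ) T))) := by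
    refine (hg_char_int.const_mul (4 * (1 + ‖w‖ ^ 2))).mono'
      (hg'.mul hw'.measurable).aestronglyMeasurable (ae_of_all _ fun q => ?_)
    rw [norm_mul, Real.norm_eq_abs, Real.norm_of_nonneg (morawetzWeight_nonneg _ _)]
    have := mul_le_mul_of_nonneg_left
      (morawetzWeight_sub_le (q.1.1 + q.2 • (q.1.2 - w)) q.1.2 w q.1.1)
      (abs_nonneg (g (q.1.1 + q.2 • q.1.2) q.1.2 q.2))
    linarith
  have hgi : Integrable (fun q : ((𝔼 n) × (𝔼 n)) × ℝ =>
        g (q.1.1 + q.2 • q.1.2) q.1.2 q.2)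
        ((volume : Measure ((𝔼 n) × (𝔼 n))).prod (volume.restrict (Icc (0:ℝ) T))) := by
    refine hg_char_int.mono' hg'.aestronglyMeasurable (ae_of_all _ fun q => ?_)
    rw [Real.norm_eq_abs]
    exact le_mul_of_one_le_right (abs_nonneg _)
      (by nlinarith [sq_nonneg ‖q.1.1‖, sq_nonneg ‖q.1.2‖])
  have hf0 : Integrable fun p : (𝔼 n) × (𝔼 n) =>
      f p.1 p.2 0 * morawetzWeight p.1 (p.2 - w) := by
    have hc : Continuous fun p : (𝔼 n) × (𝔼 n) =>
        f p.1 p.2 0 * morawetzWeight p.1 (p.2 - w) := by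
      have h1 : Continuous fun p : (𝔼 n) × (𝔼 n) => f p.1 p.2 0 :=
        hf_cont.comp (f := fun p : (𝔼 n) × (𝔼 n) => (p, (0:ℝ))) (by fun_prop)
      have h2 : Continuous fun p : (𝔼 n) × (𝔼 n) => morawetzWeight p.1 (p.2 - w) :=
        continuous_morawetzWeight.comp
          (f := fun p : (𝔼 n) × (𝔼 n) => (p.1, p.2 - w)) (by fun_prop)
      exact h1.mul h2
    refine (hf_int.const_mul (4 * (1 + ‖w‖ ^ 2))).mono' hc.aestronglyMeasurable
      (ae_of_all _ fun p => ?_)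
    rw [norm_mul, Real.norm_of_nonneg (hf_nonneg _ _ _ le_rfl),
      Real.norm_of_nonneg (morawetzWeight_nonneg _ _)]
    have := mul_le_mul_of_nonneg_left (morawetzWeight_sub_le p.1 p.2 w p.1)
      (hf_nonneg p.1 p.2 0 le_rfl)
    linarith
  set R : (𝔼 n) × (𝔼 n) → ℝ := fun p => f p.1 p.2 0 * morawetzWeight p.1 (p.2 - w) +
    ∫ s in Icc (0:ℝ) T, g (p.1 + s • p.2) p.2 s *
      morawetzWeight (p.1 + s • (p.2 - w)) (p.2 - w) with hR
  have hRi : Integrable R := hf0.add hint.integral_prod_left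
  have hRint : ∫ p, R p = ∫ p : (𝔼 n) × (𝔼 n), f p.1 p.2 0 * morawetzWeight p.1 (p.2 - w) := by
    rw [hR, integral_add hf0 hint.integral_prod_left,
      integral_interaction_eq_zero g hmeso_mass hmeso_mom hmeso_en w T hint, add_zero]
  have key : ∀ᵐ p : (𝔼 n) × (𝔼 n), 0 ≤ R p ∧ ∫⁻ s in Icc (0:ℝ) T, ENNReal.ofReal
      (f (p.1 + s • p.2) p.2 s * hessForm (p.1 + s • (p.2 - w)) (p.2 - w)) ≤
        ENNReal.ofReal (R p) := by
    filter_upwards [hgi.prod_right_ae] with p hp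
    have hfc : Continuous fun s : ℝ => f (p.1 + s • p.2) p.2 s :=
      hf_cont.comp (f := fun s : ℝ => ((p.1 + s • p.2, p.2), s)) (by fun_prop)
    have hkc : Continuous fun s : ℝ => hessForm (p.1 + s • (p.2 - w)) (p.2 - w) :=
      continuous_hessForm.comp
        (f := fun s : ℝ => (p.1 + s • (p.2 - w), p.2 - w)) (by fun_prop)
    have hparts := parts_along hT.le (F := fun s => f (p.1 + s • p.2) p.2 s)
      (G := fun s => g (p.1 + s • p.2) p.2 s) hp
      (fun t ht => by simpa using h_mild p.1 p.2 t ht) hkc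
      (fun s => hasDerivAt_morawetzWeight p.1 (p.2 - w) s)
    have hnn : ∀ᵐ s ∂(volume.restrict (Icc (0:ℝ) T)),
        0 ≤ f (p.1 + s • p.2) p.2 s * hessForm (p.1 + s • (p.2 - w)) (p.2 - w) := by
      filter_upwards [ae_restrict_mem measurableSet_Icc] with s hs
      exact mul_nonneg (hf_nonneg _ _ _ hs.1) (hessForm_nonneg _ _)
    have hle : ∫ s in Icc (0:ℝ) T,
        f (p.1 + s • p.2) p.2 s * hessForm (p.1 + s • (p.2 - w)) (p.2 - w) ≤ R p := by
      rw [hparts]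
      have := mul_nonneg (hf_nonneg (p.1 + T • p.2) p.2 T hT.le)
        (morawetzWeight_nonneg (p.1 + T • (p.2 - w)) (p.2 - w))
      simp only [hR, zero_smul, add_zero]
      linarith
    refine ⟨(integral_nonneg_of_ae hnn).trans hle, ?_⟩
    have hfk : Integrable (fun s : ℝ =>
        f (p.1 + s • p.2) p.2 s * hessForm (p.1 + s • (p.2 - w)) (p.2 - w))
        (volume.restrict (Icc (0:ℝ) T)) :=
      (hfc.mul hkc).continuousOn.integrableOn_compact isCompact_Icc
    rw [← ofReal_integral_eq_lintegral_ofReal hfk hnn]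
    exact ENNReal.ofReal_le_ofReal hle
  calc _ ≤ ∫⁻ p, ENNReal.ofReal (R p) := lintegral_mono_ae (key.mono fun p hp => hp.2)
    _ = ENNReal.ofReal (∫ p, R p) :=
      (ofReal_integral_eq_lintegral_ofReal hRi (key.mono fun p hp => hp.1)).symm
    _ = _ := by rw [hRint]

/-- Passage of the estimate from characteristic to Eulerian coordinates. -/
lemma lintegral_char_eq {n : ℕ} (f : (𝔼 n) → (𝔼 n) → ℝ → ℝ)
    (hf_cont : Continuous fun p : ((𝔼 n) × (𝔼 n)) × ℝ => f p.1.1 p.1.2 p.2)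
    (w : 𝔼 n) (T : ℝ) :
    ∫⁻ s in Icc (0:ℝ) T, ∫⁻ p : (𝔼 n) × (𝔼 n), ENNReal.ofReal
        (f p.1 p.2 s * hessForm (p.1 - s • w) (p.2 - w)) =
    ∫⁻ p : (𝔼 n) × (𝔼 n), ∫⁻ s in Icc (0:ℝ) T, ENNReal.ofReal
        (f (p.1 + s • p.2) p.2 s * hessForm (p.1 + s • (p.2 - w)) (p.2 - w)) := by
  have hc : Continuous fun q : ((𝔼 n) × (𝔼 n)) × ℝ => f (q.1.1 + q.2 • q.1.2) q.1.2 q.2 *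
      hessForm (q.1.1 + q.2 • (q.1.2 - w)) (q.1.2 - w) := by
    have h1 : Continuous fun q : ((𝔼 n) × (𝔼 n)) × ℝ => f (q.1.1 + q.2 • q.1.2) q.1.2 q.2 :=
      hf_cont.comp (f := fun q : ((𝔼 n) × (𝔼 n)) × ℝ =>
        ((q.1.1 + q.2 • q.1.2, q.1.2), q.2)) (by fun_prop)
    have h2 : Continuous fun q : ((𝔼 n) × (𝔼 n)) × ℝ =>
        hessForm (q.1.1 + q.2 • (q.1.2 - w)) (q.1.2 - w) :=
      continuous_hessForm.comp (f := fun q : ((𝔼 n) × (𝔼 n)) × ℝ =>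
        (q.1.1 + q.2 • (q.1.2 - w), q.1.2 - w)) (by fun_prop)
    exact h1.mul h2
  have hm : Measurable (Function.uncurry fun (p : (𝔼 n) × (𝔼 n)) (s : ℝ) => ENNReal.ofReal
      (f (p.1 + s • p.2) p.2 s * hessForm (p.1 + s • (p.2 - w)) (p.2 - w))) :=
    hc.measurable.ennreal_ofReal
  rw [lintegral_lintegral_swap hm.aemeasurable]
  refine lintegral_congr fun s => ?_
  rw [← (measurePreserving_shear s).lintegral_comp_emb (shear s).measurableEmbedding]
  refine lintegral_congr fun p => ?_
  simp [shear, smul_sub, add_sub_assoc]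

/-- Galilean-invariant version: for a fixed velocity `w` and a bounded set `D`,
(i) `∫₀^∞ ∫_{ℝⁿ} ∫_{D+tw} f(x,ξ,t)|ξ−w|² dx dξ dt < ∞`, and
(ii) for every `v > 0`, `∫₀^∞ ∫_{|ξ−w|≥v} ∫_{D+tw} f(x,ξ,t) dx dξ dt < ∞`. -/
theorem galilean_dispersion {n : ℕ} (hn : 2 ≤ n)
    (f g : EuclideanSpace ℝ (Fin n) → EuclideanSpace ℝ (Fin n) → ℝ → ℝ)
    (hf_nonneg : ∀ x ξ t, (0:ℝ) ≤ t → 0 ≤ f x ξ t)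
    (hf_meas : Measurable fun p : (EuclideanSpace ℝ (Fin n) × EuclideanSpace ℝ (Fin n)) × ℝ =>
      f p.1.1 p.1.2 p.2)
    (hg_meas : Measurable fun p : (EuclideanSpace ℝ (Fin n) × EuclideanSpace ℝ (Fin n)) × ℝ =>
      g p.1.1 p.1.2 p.2)
    -- mild solution along characteristics
    (h_mild : ∀ (x ξ : EuclideanSpace ℝ (Fin n)) (t : ℝ), 0 ≤ t →
      f (x + t • ξ) ξ t = f x ξ 0 + ∫ s in Icc (0:ℝ) t, g (x + s • ξ) ξ s)
    -- `g` is a mesoscopic interaction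
    (hmeso_mass : ∀ (t : ℝ), 0 ≤ t → ∀ x, Integrable (fun ξ => g x ξ t) ∧ ∫ ξ, g x ξ t = 0)
    (hmeso_mom : ∀ (t : ℝ), 0 ≤ t → ∀ x, Integrable (fun ξ => g x ξ t • ξ) ∧
      ∫ ξ, g x ξ t • ξ = (0 : EuclideanSpace ℝ (Fin n)))
    (hmeso_en : ∀ (t : ℝ), 0 ≤ t → ∀ x, Integrable (fun ξ => g x ξ t * ‖ξ‖ ^ 2) ∧
      ∫ ξ, g x ξ t * ‖ξ‖ ^ 2 = 0)
    -- finiteness of mass, energy and second moments at every time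
    (hf_int : ∀ (t : ℝ), 0 ≤ t →
      Integrable (fun p : EuclideanSpace ℝ (Fin n) × EuclideanSpace ℝ (Fin n) =>
        f p.1 p.2 t * (1 + ‖p.1‖ ^ 2 + ‖p.2‖ ^ 2)))
    -- integrability of the interaction along characteristics with second moments
    (hg_char_int : ∀ T : ℝ, 0 < T →
      Integrable (fun q : (EuclideanSpace ℝ (Fin n) × EuclideanSpace ℝ (Fin n)) × ℝ =>
        |g (q.1.1 + q.2 • q.1.2) q.1.2 q.2| * (1 + ‖q.1.1‖ ^ 2 + ‖q.1.2‖ ^ 2))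
        ((volume : Measure (EuclideanSpace ℝ (Fin n) × EuclideanSpace ℝ (Fin n))).prod
          (volume.restrict (Icc (0:ℝ) T))))
    -- the total energy
    (Energy : ℝ)
    (hE : Energy = ∫ p : EuclideanSpace ℝ (Fin n) × EuclideanSpace ℝ (Fin n),
      f p.1 p.2 0 * ‖p.2‖ ^ 2)
    -- `f` is smooth enough for the integration by parts in the spatial variable
    (hf_smooth : ContDiff ℝ 1 (fun p : (EuclideanSpace ℝ (Fin n) × EuclideanSpace ℝ (Fin n)) × ℝ =>
      f p.1.1 p.1.2 p.2))
    :
    ∀ w : EuclideanSpace ℝ (Fin n), ∀ D : Set (EuclideanSpace ℝ (Fin n)), Bornology.IsBounded D →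
      (∫⁻ t in Ioi (0:ℝ), ∫⁻ ξ : EuclideanSpace ℝ (Fin n),
          ∫⁻ x in (fun y => y + t • w) '' D,
            ENNReal.ofReal (f x ξ t * ‖ξ - w‖ ^ 2) < ⊤)
      ∧ ∀ v : ℝ, 0 < v →
          ∫⁻ t in Ioi (0:ℝ), ∫⁻ ξ in {ξ : EuclideanSpace ℝ (Fin n) | v ≤ ‖ξ - w‖},
            ∫⁻ x in (fun y => y + t • w) '' D,
              ENNReal.ofReal (f x ξ t) < ⊤ := by
  intro w D hD
  have hf_cont := hf_smooth.continuous
  set M : ℝ≥0∞ := ENNReal.ofReal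
    (∫ p : (𝔼 n) × (𝔼 n), f p.1 p.2 0 * morawetzWeight p.1 (p.2 - w))
  set Q : ℝ → ℝ≥0∞ := fun s => ∫⁻ p : (𝔼 n) × (𝔼 n), ENNReal.ofReal
        (f p.1 p.2 s * hessForm (p.1 - s • w) (p.2 - w)) with hQ
  have hbound : ∀ N : ℕ, ∫⁻ s in Ioc (0:ℝ) N, Q s ≤ M := by
    intro N
    have hN : (0:ℝ) < N + 1 := by positivity
    calc ∫⁻ s in Ioc (0:ℝ) N, Q s ≤ ∫⁻ s in Icc (0:ℝ) (N + 1), Q s :=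
          lintegral_mono_set fun s hs => ⟨hs.1.le, hs.2.trans (by linarith)⟩
      _ ≤ M := by
          rw [hQ, lintegral_char_eq f hf_cont w]
          exact morawetz_char f g hf_nonneg hf_cont hg_meas h_mild hmeso_mass hmeso_mom hmeso_en
            (hf_int 0 le_rfl) hN (hg_char_int _ hN) w
  have hQM : ∫⁻ s in Ioi (0:ℝ), Q s ≤ M := by
    have hU : Ioi (0:ℝ) = ⋃ N : ℕ, Ioc (0:ℝ) N := by
      ext s
      simp only [mem_Ioi, mem_iUnion, mem_Ioc]
      exact ⟨fun h => ⟨⌈s⌉₊, h, Nat.le_ceil s⟩, fun ⟨_, h, _⟩ => h⟩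
    rw [hU, setLIntegral_iUnion_of_directed]
    · exact iSup_le hbound
    · exact directed_of_isDirected_le fun a b hab => Ioc_subset_Ioc_right (by exact_mod_cast hab)
  obtain ⟨r, hr⟩ := hD.exists_norm_le
  set C : ℝ := (1 + r ^ 2) * √(1 + r ^ 2) with hC
  have hC0 : 0 ≤ C := by positivity
  have hi : ∀ t : ℝ, 0 < t → ∫⁻ ξ : 𝔼 n, ∫⁻ x in (fun y => y + t • w) '' D,
      ENNReal.ofReal (f x ξ t * ‖ξ - w‖ ^ 2) ≤ ENNReal.ofReal C * Q t := by
    intro t ht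
    have hc : Continuous fun p : (𝔼 n) × (𝔼 n) =>
        f p.1 p.2 t * hessForm (p.1 - t • w) (p.2 - w) := by
      have h1 : Continuous fun p : (𝔼 n) × (𝔼 n) => f p.1 p.2 t :=
        hf_cont.comp (f := fun p : (𝔼 n) × (𝔼 n) => (p, t)) (by fun_prop)
      have h2 : Continuous fun p : (𝔼 n) × (𝔼 n) => hessForm (p.1 - t • w) (p.2 - w) :=
        continuous_hessForm.comp
          (f := fun p : (𝔼 n) × (𝔼 n) => (p.1 - t • w, p.2 - w)) (by fun_prop)
      exact h1.mul h2
    rw [hQ]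
    simp only
    rw [Measure.volume_eq_prod, lintegral_prod_symm' _
      hc.measurable.ennreal_ofReal, ← lintegral_const_mul' _ _ (by simp)]
    refine lintegral_mono fun ξ => ?_
    simp only
    rw [← lintegral_const_mul' _ _ (by simp)]
    -- `D` need not be measurable, so it is first enlarged to a closed ball.
    have hsub : (fun y => y + t • w) '' D ⊆ Metric.closedBall (t • w) r := by
      rintro _ ⟨y, hy, rfl⟩
      simpa [dist_eq_norm] using hr y hy
    refine (lintegral_mono_set hsub).trans
      (le_trans ?_ (setLIntegral_le_lintegral (Metric.closedBall (t • w) r) _))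
    refine setLIntegral_mono' Metric.isClosed_closedBall.measurableSet fun x hx => ?_
    rw [← ENNReal.ofReal_mul hC0]
    refine ENNReal.ofReal_le_ofReal ?_
    rw [Metric.mem_closedBall, dist_eq_norm] at hx
    have hden : (1 + ‖x - t • w‖ ^ 2) * √(1 + ‖x - t • w‖ ^ 2) ≤ C := by
      rw [hC]; gcongr
    have hpos : 0 < (1 + ‖x - t • w‖ ^ 2) * √(1 + ‖x - t • w‖ ^ 2) := by positivity
    have hlow := (div_le_iff₀ hpos).1 (hessForm_lower (x - t • w) (ξ - w))
    have hk := hessForm_nonneg (x - t • w) (ξ - w)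
    have : ‖ξ - w‖ ^ 2 ≤ C * hessForm (x - t • w) (ξ - w) := by nlinarith
    nlinarith [mul_le_mul_of_nonneg_left this (hf_nonneg x ξ t ht.le)]
  have hfin : ENNReal.ofReal C * ∫⁻ s in Ioi (0:ℝ), Q s < ⊤ :=
    ENNReal.mul_lt_top ENNReal.ofReal_lt_top (hQM.trans_lt ENNReal.ofReal_lt_top)
  have hI : ∫⁻ t in Ioi (0:ℝ), ∫⁻ ξ : 𝔼 n, ∫⁻ x in (fun y => y + t • w) '' D,
      ENNReal.ofReal (f x ξ t * ‖ξ - w‖ ^ 2) < ⊤ := by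
    refine lt_of_le_of_lt ?_ hfin
    rw [← lintegral_const_mul' _ _ (by simp)]
    exact setLIntegral_mono' measurableSet_Ioi fun t ht => hi t ht
  refine ⟨hI, fun v hv => ?_⟩
  refine lt_of_le_of_lt ?_ (ENNReal.mul_lt_top (a := ENNReal.ofReal (v ^ 2)⁻¹)
    ENNReal.ofReal_lt_top hI)
  rw [← lintegral_const_mul' _ _ (by simp)]
  refine setLIntegral_mono' measurableSet_Ioi fun t ht => ?_
  rw [← lintegral_const_mul' _ _ (by simp)]
  have hms : MeasurableSet {ξ : 𝔼 n | v ≤ ‖ξ - w‖} :=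
    (isClosed_le continuous_const (by fun_prop)).measurableSet
  refine le_trans (setLIntegral_mono' hms fun ξ hξ => ?_) (setLIntegral_le_lintegral _ _)
  rw [← lintegral_const_mul' _ _ (by simp)]
  refine lintegral_mono fun x => ?_
  rw [← ENNReal.ofReal_mul (by positivity)]
  refine ENNReal.ofReal_le_ofReal ?_
  have hξ' : v ≤ ‖ξ - w‖ := hξ
  have hf0 := hf_nonneg x ξ t (le_of_lt ht)
  rw [← div_eq_inv_mul, le_div_iff₀ (by positivity)]
  gcongr
end
end

section
/- (Mass bound outside punctured blind cones) For every t ≥ 0, every R > 0, every v > 0 and every c ∈ (0, π/2): ∬_{{(x,ξ) : |x| > R, ξ ∉ K₀(x,c,v)}} f(x,ξ,t) dx dξ ≤ ‖f‖_G / (R·v·(1−cos c)), where ξ ∉ K₀(x,c,v) means |ξ| ≥ v and the angle θ(x,ξ) lies in [c, π−c]. -/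
/-!
The bound is Chebyshev's inequality for the nonnegative density
`f (|x||ξ| - x·ξ) = f |x||ξ| (1 - cos θ(x,ξ))`, whose integral is `U(t) - A(t) ≤ G`: on the region
of integration `|x||ξ| (1 - cos θ) ≥ R v (1 - cos c)`.
-/

open MeasureTheory Real Filter Set InnerProductGeometry
open scoped RealInnerProductSpace ENNReal

noncomputable section

/-- Holds since `x·y = |x||y| cos θ(x,y)` and cosine is decreasing on `[0, π]`. -/
lemma mul_one_sub_cos_le_norm_mul_sub_inner {E : Type*} [NormedAddCommGroup E]
    [InnerProductSpace ℝ E] {x y : E} {R v c : ℝ} (hv : 0 < v) (hc : 0 ≤ c)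
    (hx : R ≤ ‖x‖) (hy : v ≤ ‖y‖) (hxy : c ≤ angle x y) :
    R * v * (1 - cos c) ≤ ‖x‖ * ‖y‖ - ⟪x, y⟫ := by
  have hcos : cos (angle x y) ≤ cos c := cos_le_cos_of_nonneg_of_le_pi hc (angle_le_pi x y) hxy
  calc R * v * (1 - cos c) ≤ ‖x‖ * ‖y‖ * (1 - cos (angle x y)) := by
        have := cos_le_one c
        gcongr
    _ = ‖x‖ * ‖y‖ - ⟪x, y⟫ := by
        rw [← cos_angle_mul_norm_mul_norm x y]; ring

/-- Mass bound outside the punctured blind cones: for every `t ≥ 0`,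
`R > 0`, `v > 0` and `c ∈ (0, π/2)`, the mass carried by points with `|x| > R` and velocities
outside the punctured blind cone `K₀(x,c,v)` (i.e. with `|ξ| ≥ v` and
`θ(x,ξ) ∈ [c, π−c]`) is at most `‖f‖_G / (R·v·(1−cos c))`, where `‖f‖_G` is any bound for
`sup_{t≥0}(U(t) − A(t))`. -/
theorem mass_bound_outside_punctured_cones {n : ℕ} (hn : 1 ≤ n)
    (f : EuclideanSpace ℝ (Fin n) → EuclideanSpace ℝ (Fin n) → ℝ → ℝ)
    (hf_nonneg : ∀ x ξ t, (0:ℝ) ≤ t → 0 ≤ f x ξ t)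
    (hf_meas : Measurable fun p : (EuclideanSpace ℝ (Fin n) × EuclideanSpace ℝ (Fin n)) × ℝ =>
      f p.1.1 p.1.2 p.2)
    -- the angular momentum `A(t)` and the uncertainty `U(t)` are absolutely convergent
    (hA_int : ∀ (t : ℝ), 0 ≤ t →
      Integrable (fun p : EuclideanSpace ℝ (Fin n) × EuclideanSpace ℝ (Fin n) =>
        f p.1 p.2 t * ⟪p.1, p.2⟫))
    (hU_int : ∀ (t : ℝ), 0 ≤ t →
      Integrable (fun p : EuclideanSpace ℝ (Fin n) × EuclideanSpace ℝ (Fin n) =>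
        f p.1 p.2 t * (‖p.1‖ * ‖p.2‖)))
    -- `G` bounds the relative angular norm `‖f‖_G = sup_{t ≥ 0} (U(t) − A(t))`
    (G : ℝ)
    (hG : ∀ (t : ℝ), 0 ≤ t →
      (∫ p : EuclideanSpace ℝ (Fin n) × EuclideanSpace ℝ (Fin n),
          f p.1 p.2 t * (‖p.1‖ * ‖p.2‖))
        - (∫ p : EuclideanSpace ℝ (Fin n) × EuclideanSpace ℝ (Fin n),
            f p.1 p.2 t * ⟪p.1, p.2⟫) ≤ G) :
    ∀ (t : ℝ), 0 ≤ t → ∀ (R v c : ℝ), 0 < R → 0 < v → 0 < c → c < π / 2 →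
      ∫⁻ p in {p : EuclideanSpace ℝ (Fin n) × EuclideanSpace ℝ (Fin n) |
          R < ‖p.1‖ ∧ v ≤ ‖p.2‖ ∧ angle p.1 p.2 ∈ Icc c (π - c)},
        ENNReal.ofReal (f p.1 p.2 t)
      ≤ ENNReal.ofReal (G / (R * v * (1 - cos c))) := by
  intro t ht R v c hR hv hc hc2
  have hcos : cos c < 1 := by
    simpa using cos_lt_cos_of_nonneg_of_le_pi le_rfl (by linarith [pi_pos]) hc
  have hK : 0 < R * v * (1 - cos c) := mul_pos (mul_pos hR hv) (by linarith)
  set K := R * v * (1 - cos c) with hKdef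
  set g : EuclideanSpace ℝ (Fin n) × EuclideanSpace ℝ (Fin n) → ℝ := fun p =>
    (f p.1 p.2 t * (‖p.1‖ * ‖p.2‖) - f p.1 p.2 t * ⟪p.1, p.2⟫) / K with hg
  have hg_int : Integrable g := ((hU_int t ht).sub (hA_int t ht)).div_const K
  have hg_nonneg : ∀ p, 0 ≤ g p := fun p => by
    have h := mul_le_mul_of_nonneg_left (real_inner_le_norm p.1 p.2) (hf_nonneg p.1 p.2 t ht)
    exact div_nonneg (by linarith) hK.le
  calc _ ≤ ∫⁻ p in {p : EuclideanSpace ℝ (Fin n) × EuclideanSpace ℝ (Fin n) |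
          R < ‖p.1‖ ∧ v ≤ ‖p.2‖ ∧ angle p.1 p.2 ∈ Icc c (π - c)}, ENNReal.ofReal (g p) := by
        refine setLIntegral_mono_ae hg_int.aemeasurable.ennreal_ofReal.restrict
          (Eventually.of_forall ?_)
        rintro p ⟨hx, hξ, hθ⟩
        apply ENNReal.ofReal_le_ofReal
        rw [hg, le_div_iff₀ hK, ← mul_sub]
        exact mul_le_mul_of_nonneg_left
          (mul_one_sub_cos_le_norm_mul_sub_inner hv hc.le hx.le hξ hθ.1) (hf_nonneg _ _ t ht)
    _ ≤ ∫⁻ p, ENNReal.ofReal (g p) := setLIntegral_le_lintegral _ _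
    _ = ENNReal.ofReal (∫ p, g p) :=
        (ofReal_integral_eq_lintegral_ofReal hg_int (Eventually.of_forall hg_nonneg)).symm
    _ ≤ ENNReal.ofReal (G / K) := by
        apply ENNReal.ofReal_le_ofReal
        rw [hg, integral_div, integral_sub (hU_int t ht) (hA_int t ht)]
        exact div_le_div_of_nonneg_right (hG t ht) hK.le
end
end

section
/- (Concentration of mass in punctured blind cones) For every observer x₀ ∈ ℝⁿ, every c ∈ (0, π/2) and every v > 0: lim_{T→∞} (1/T) ∫₀^T ∬_{Γ_{x₀}(c,v)} f(x,ξ,t) dx dξ dt = M, i.e. as time goes to infinity the time-averaged mass concentrates in the collection of punctured blind cones. -/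
/-!
The proof rests on the conservation law `∬ f(x,ξ,t) ‖x - tξ - x₀‖² dx dξ = ∬ f(x,ξ,0) ‖x - x₀‖² dx dξ`.
In characteristic coordinates `y = x - tξ` the weight is constant in time, so the only possible change
comes from `g`; for fixed `x` and `s` the weight `‖x - sξ - x₀‖²` is a combination of `1`, `ξ` and
`‖ξ‖²`, hence integrates to zero against the mesoscopic interaction `g(x,·,s)`. The weight `1` gives
conservation of mass in the same way (`weighted_conservation` treats both).

Off the punctured blind cones, `‖ξ‖ ≥ v` and the angle between `x - x₀` and `ξ` lies in `[c, π - c]`, so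
`‖x - x₀ - tξ‖² ≥ t² v² sin² c` (`dist_sq_lower_bound`). Chebyshev's inequality then bounds the mass
outside the cones at time `t` by `C / t²`; with the trivial bound `M` this defect is at most
`(M + C) / (1 + t²)`, which is integrable in time, so its time average over `[0, T]` is `O(1/T)`.
-/

open MeasureTheory Real Filter Set InnerProductGeometry
open scoped RealInnerProductSpace ENNReal

noncomputable section

/-- Free transport `(x, ξ) ↦ (x + t ξ, ξ)` on phase space. -/
def freeFlow {n : ℕ} (t : ℝ) :
    (EuclideanSpace ℝ (Fin n) × EuclideanSpace ℝ (Fin n)) ≃ₜ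
      (EuclideanSpace ℝ (Fin n) × EuclideanSpace ℝ (Fin n)) where
  toFun p := (p.1 + t • p.2, p.2)
  invFun p := (p.1 - t • p.2, p.2)
  left_inv p := by simp
  right_inv p := by simp
  continuous_toFun := by fun_prop
  continuous_invFun := by fun_prop

lemma freeFlow_measurePreserving {n : ℕ} (t : ℝ) :
    MeasurePreserving (freeFlow (n := n) t) volume volume := by
  have h : MeasurePreserving
      (fun q : EuclideanSpace ℝ (Fin n) × EuclideanSpace ℝ (Fin n) => (q.1, q.2 + t • q.1))
      (volume.prod volume) (volume.prod volume) :=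
    MeasurePreserving.skew_product (g := fun ξ x => x + t • ξ) (MeasurePreserving.id volume)
      (by fun_prop)
      (Eventually.of_forall fun ξ => (measurePreserving_add_right volume (t • ξ)).map_eq)
  exact (Measure.measurePreserving_swap.comp h).comp Measure.measurePreserving_swap

/-- If a weight `w`, transported along characteristics, is annihilated by the interaction at every
time and place, then its integral against the solution is conserved. -/
lemma weighted_conservation {n : ℕ}
    (f g : EuclideanSpace ℝ (Fin n) → EuclideanSpace ℝ (Fin n) → ℝ → ℝ)
    (hg_meas : Measurable fun p : (EuclideanSpace ℝ (Fin n) × EuclideanSpace ℝ (Fin n)) × ℝ =>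
      g p.1.1 p.1.2 p.2)
    (h_mild : ∀ (x ξ : EuclideanSpace ℝ (Fin n)) (t : ℝ), 0 ≤ t →
      f (x + t • ξ) ξ t = f x ξ 0 + ∫ s in Icc (0:ℝ) t, g (x + s • ξ) ξ s)
    (hg_char_int : ∀ T : ℝ, 0 < T →
      Integrable (fun q : (EuclideanSpace ℝ (Fin n) × EuclideanSpace ℝ (Fin n)) × ℝ =>
        |g (q.1.1 + q.2 • q.1.2) q.1.2 q.2| * (1 + ‖q.1.1‖ ^ 2 + ‖q.1.2‖ ^ 2))
        ((volume : Measure (EuclideanSpace ℝ (Fin n) × EuclideanSpace ℝ (Fin n))).prod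
          (volume.restrict (Icc (0:ℝ) T))))
    (w : EuclideanSpace ℝ (Fin n) → ℝ) (hw : Measurable w) (K : ℝ)
    (hwK : ∀ y, |w y| ≤ K * (1 + ‖y‖ ^ 2))
    (hf0 : Integrable (fun p : EuclideanSpace ℝ (Fin n) × EuclideanSpace ℝ (Fin n) =>
      f p.1 p.2 0 * w p.1))
    (hgw : ∀ s : ℝ, 0 ≤ s → ∀ x, ∫ ξ, g x ξ s * w (x - s • ξ) = 0)
    (t : ℝ) (ht : 0 < t) :
    Integrable (fun p : EuclideanSpace ℝ (Fin n) × EuclideanSpace ℝ (Fin n) =>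
        f p.1 p.2 t * w (p.1 - t • p.2)) ∧
      ∫ p : EuclideanSpace ℝ (Fin n) × EuclideanSpace ℝ (Fin n), f p.1 p.2 t * w (p.1 - t • p.2)
        = ∫ p : EuclideanSpace ℝ (Fin n) × EuclideanSpace ℝ (Fin n), f p.1 p.2 0 * w p.1 := by
  have hK : 0 ≤ K := by
    have := (abs_nonneg _).trans (hwK 0)
    simpa using this
  have hGm : Measurable fun q : (EuclideanSpace ℝ (Fin n) × EuclideanSpace ℝ (Fin n)) × ℝ =>
      g (q.1.1 + q.2 • q.1.2) q.1.2 q.2 * w q.1.1 := by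
    have h1 : Measurable fun q : (EuclideanSpace ℝ (Fin n) × EuclideanSpace ℝ (Fin n)) × ℝ =>
        ((q.1.1 + q.2 • q.1.2, q.1.2), q.2) := by fun_prop
    exact (hg_meas.comp h1).mul (hw.comp (by fun_prop))
  have hG : Integrable (fun q : (EuclideanSpace ℝ (Fin n) × EuclideanSpace ℝ (Fin n)) × ℝ =>
      g (q.1.1 + q.2 • q.1.2) q.1.2 q.2 * w q.1.1)
      ((volume : Measure (EuclideanSpace ℝ (Fin n) × EuclideanSpace ℝ (Fin n))).prod
          (volume.restrict (Icc (0:ℝ) t))) := by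
    refine ((hg_char_int t ht).const_mul K).mono' hGm.aestronglyMeasurable
      (Eventually.of_forall fun q => ?_)
    rw [norm_mul, Real.norm_eq_abs, Real.norm_eq_abs]
    calc _ ≤ |g (q.1.1 + q.2 • q.1.2) q.1.2 q.2| * (K * (1 + ‖q.1.1‖ ^ 2 + ‖q.1.2‖ ^ 2)) := by
          gcongr
          refine (hwK _).trans ?_
          exact mul_le_mul_of_nonneg_left (by linarith [sq_nonneg ‖q.1.2‖]) hK
      _ = _ := by ring
  -- The mild formulation, multiplied by the weight, in characteristic coordinates.
  have hform : ∀ p : EuclideanSpace ℝ (Fin n) × EuclideanSpace ℝ (Fin n),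
      f (p.1 + t • p.2) p.2 t * w p.1 = f p.1 p.2 0 * w p.1 +
        ∫ s in Icc (0:ℝ) t, g (p.1 + s • p.2) p.2 s * w p.1 := by
    intro p
    rw [h_mild _ _ _ ht.le, add_mul, integral_mul_const]
  -- The source term contributes nothing.
  have hzero : ∫ p : EuclideanSpace ℝ (Fin n) × EuclideanSpace ℝ (Fin n),
      ∫ s in Icc (0:ℝ) t, g (p.1 + s • p.2) p.2 s * w p.1 = 0 := by
    rw [integral_integral_swap (f := fun (p : EuclideanSpace ℝ (Fin n) × EuclideanSpace ℝ (Fin n))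
      (s : ℝ) => g (p.1 + s • p.2) p.2 s * w p.1) hG]
    apply integral_eq_zero_of_ae
    filter_upwards [hG.prod_left_ae, ae_restrict_mem measurableSet_Icc] with s hs hs0
    have hcomp : (fun p : EuclideanSpace ℝ (Fin n) × EuclideanSpace ℝ (Fin n) =>
        g (p.1 + s • p.2) p.2 s * w p.1) =
        (fun p => g p.1 p.2 s * w (p.1 - s • p.2)) ∘ freeFlow s := by
      funext p
      simp [freeFlow]
    have hint : Integrable (fun p : EuclideanSpace ℝ (Fin n) × EuclideanSpace ℝ (Fin n) =>
        g p.1 p.2 s * w (p.1 - s • p.2)) := by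
      rw [← (freeFlow_measurePreserving s).integrable_comp_emb (freeFlow s).measurableEmbedding,
        ← hcomp]
      exact hs
    have := (freeFlow_measurePreserving (n := n) s).integral_comp (freeFlow s).measurableEmbedding
      (fun p => g p.1 p.2 s * w (p.1 - s • p.2))
    change ∫ p : EuclideanSpace ℝ (Fin n) × EuclideanSpace ℝ (Fin n),
      g (p.1 + s • p.2) p.2 s * w p.1 = 0
    rw [hcomp]
    refine this.trans ?_
    rw [Measure.volume_eq_prod, integral_prod _ hint]
    simp [hgw s hs0.1]
  have hcomp : (fun p : EuclideanSpace ℝ (Fin n) × EuclideanSpace ℝ (Fin n) =>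
      f (p.1 + t • p.2) p.2 t * w p.1) =
      (fun p => f p.1 p.2 t * w (p.1 - t • p.2)) ∘ freeFlow t := by
    funext p
    simp [freeFlow]
  have hGp := hG.integral_prod_left
  constructor
  · rw [← (freeFlow_measurePreserving t).integrable_comp_emb (freeFlow t).measurableEmbedding,
      ← hcomp]
    exact (hf0.add hGp).congr (Eventually.of_forall fun p => (hform p).symm)
  · have := (freeFlow_measurePreserving (n := n) t).integral_comp (freeFlow t).measurableEmbedding
      (fun p => f p.1 p.2 t * w (p.1 - t • p.2))
    rw [← this]
    change ∫ p, ((fun p => f p.1 p.2 t * w (p.1 - t • p.2)) ∘ freeFlow t) p = _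
    rw [← hcomp]
    simp_rw [hform]
    rw [integral_add hf0 hGp, hzero, add_zero]

/-- A velocity seen under an angle in `[c, π - c]` from the observer cannot match the ballistic
position `t ξ`: the distance of `y` to the line `ℝ ξ` bounds `‖y - t ξ‖` from below. -/
lemma dist_sq_lower_bound {n : ℕ} (y ξ : EuclideanSpace ℝ (Fin n)) (c v t : ℝ) (hc : 0 < c)
    (hv : 0 < v) (hξ : v ≤ ‖ξ‖) (hang : angle y ξ ∈ Icc c (π - c)) :
    t ^ 2 * (v ^ 2 * sin c ^ 2) ≤ ‖y - t • ξ‖ ^ 2 := by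
  have h1 : cos (angle y ξ) ≤ cos c :=
    cos_le_cos_of_nonneg_of_le_pi hc.le (angle_le_pi _ _) hang.1
  have h2 : -cos c ≤ cos (angle y ξ) := by
    rw [← cos_pi_sub]
    exact cos_le_cos_of_nonneg_of_le_pi (angle_nonneg _ _) (by linarith) hang.2
  have h3 : sin c ^ 2 ≤ 1 - cos (angle y ξ) ^ 2 := by
    have := sin_sq_add_cos_sq c
    nlinarith
  have hin : ⟪y, ξ⟫ = cos (angle y ξ) * (‖y‖ * ‖ξ‖) := (cos_angle_mul_norm_mul_norm y ξ).symm
  have hexp : ‖y - t • ξ‖ ^ 2 = (‖y‖ - t * ‖ξ‖ * cos (angle y ξ)) ^ 2 +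
      t ^ 2 * (‖ξ‖ ^ 2 * (1 - cos (angle y ξ) ^ 2)) := by
    rw [norm_sub_sq_real, real_inner_smul_right, hin, norm_smul, mul_pow, Real.norm_eq_abs, sq_abs]
    ring
  rw [hexp]
  have : t ^ 2 * (v ^ 2 * sin c ^ 2) ≤ t ^ 2 * (‖ξ‖ ^ 2 * (1 - cos (angle y ξ) ^ 2)) := by
    gcongr
  nlinarith [sq_nonneg (‖y‖ - t * ‖ξ‖ * cos (angle y ξ))]

/-- Time averages converge to `M` when the nonnegative defect `M - h(t)` is bounded by the integrable
function `A / (1 + t²)`. -/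
lemma tendsto_average_of_defect_le (h : ℝ → ℝ) (hm : Measurable h) (M A : ℝ)
    (hle : ∀ t, 0 < t → h t ≤ M) (hdef : ∀ t, 0 < t → M - h t ≤ A * (1 + t ^ 2)⁻¹) :
    Tendsto (fun T : ℝ => (∫ t in Ioc (0:ℝ) T, h t) / T) atTop (nhds M) := by
  have hI : Integrable fun t : ℝ => A * (1 + t ^ 2)⁻¹ := integrable_inv_one_add_sq.const_mul A
  have hA : 0 ≤ A := by
    have := (sub_nonneg.2 (hle 1 one_pos)).trans (hdef 1 one_pos)
    norm_num at this
    exact this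
  have hD : ∀ T : ℝ, IntegrableOn (fun t => M - h t) (Ioc 0 T) := fun T =>
    hI.integrableOn.mono' (measurable_const.sub hm).aestronglyMeasurable <| by
      filter_upwards [ae_restrict_mem measurableSet_Ioc] with t ht
      rw [Real.norm_eq_abs, abs_of_nonneg (sub_nonneg.2 (hle t ht.1))]
      exact hdef t ht.1
  have hval : ∀ T : ℝ, 0 < T →
      (∫ t in Ioc (0:ℝ) T, h t) = M * T - ∫ t in Ioc (0:ℝ) T, (M - h t) := by
    intro T hT
    have hc : IntegrableOn (fun _ : ℝ => M) (Ioc 0 T) := by simp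
    have : ∀ t, h t = M - (M - h t) := fun t => by ring
    conv_lhs => enter [2, t]; rw [this t]
    rw [integral_sub hc (hD T)]
    simp [hT.le, mul_comm]
  have hlow : ∀ T : ℝ, 0 ≤ ∫ t in Ioc (0:ℝ) T, (M - h t) := fun T =>
    setIntegral_nonneg measurableSet_Ioc fun t ht => sub_nonneg.2 (hle t ht.1)
  have hup : ∀ T : ℝ, ∫ t in Ioc (0:ℝ) T, (M - h t) ≤ ∫ t : ℝ, A * (1 + t ^ 2)⁻¹ := fun T =>
    (setIntegral_mono_on (hD T) hI.integrableOn measurableSet_Ioc fun t ht => hdef t ht.1).trans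
      (setIntegral_le_integral hI (Eventually.of_forall fun t => by positivity))
  have hlim : Tendsto (fun T : ℝ => M - (∫ t : ℝ, A * (1 + t ^ 2)⁻¹) / T) atTop (nhds M) := by
    simpa using tendsto_const_nhds.sub
      (tendsto_const_nhds.div_atTop (tendsto_id (α := ℝ) (x := atTop)))
  refine tendsto_of_tendsto_of_tendsto_of_le_of_le' hlim tendsto_const_nhds ?_ ?_
  · filter_upwards [eventually_gt_atTop 0] with T hT
    rw [hval T hT, sub_div, mul_div_cancel_right₀ _ hT.ne']
    have := hup T
    gcongr
  · filter_upwards [eventually_gt_atTop 0] with T hT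
    rw [hval T hT, sub_div, mul_div_cancel_right₀ _ hT.ne']
    have := div_nonneg (hlow T) hT.le
    linarith

/-- The transported second moment `‖x - s ξ - x₀‖²` is a collision invariant. -/
lemma interaction_second_moment {n : ℕ} (G : EuclideanSpace ℝ (Fin n) → ℝ)
    (h0 : Integrable G ∧ ∫ ξ, G ξ = 0)
    (h1 : Integrable (fun ξ => G ξ • ξ) ∧ ∫ ξ, G ξ • ξ = (0 : EuclideanSpace ℝ (Fin n)))
    (h2 : Integrable (fun ξ => G ξ * ‖ξ‖ ^ 2) ∧ ∫ ξ, G ξ * ‖ξ‖ ^ 2 = 0)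
    (x x₀ : EuclideanSpace ℝ (Fin n)) (s : ℝ) :
    ∫ ξ, G ξ * ‖x - s • ξ - x₀‖ ^ 2 = 0 := by
  have hpt : ∀ ξ, G ξ * ‖x - s • ξ - x₀‖ ^ 2 = G ξ * ‖x - x₀‖ ^ 2
      - 2 * s * ⟪x - x₀, G ξ • ξ⟫ + s ^ 2 * (G ξ * ‖ξ‖ ^ 2) := by
    intro ξ
    have : x - s • ξ - x₀ = (x - x₀) - s • ξ := by abel
    rw [this, norm_sub_sq_real, real_inner_smul_right, real_inner_smul_right, norm_smul, mul_pow,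
      Real.norm_eq_abs, sq_abs]
    ring
  simp_rw [hpt]
  have hi1 : Integrable (fun ξ => 2 * s * ⟪x - x₀, G ξ • ξ⟫) := (h1.1.const_inner _).const_mul _
  have hi0 : Integrable (fun ξ => G ξ * ‖x - x₀‖ ^ 2) := h0.1.mul_const _
  have hi01 : Integrable (fun ξ => G ξ * ‖x - x₀‖ ^ 2 - 2 * s * ⟪x - x₀, G ξ • ξ⟫) := hi0.sub hi1
  rw [integral_add hi01 (h2.1.const_mul _), integral_sub hi0 hi1, integral_mul_const,
    integral_const_mul, integral_const_mul, integral_inner h1.1, h0.2, h1.2, h2.2]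
  simp

/-- Concentration of mass in the collection of punctured blind cones:
for every observer `x₀`, every `c ∈ (0, π/2)` and every `v > 0`,
`lim_{T→∞} (1/T) ∫₀^T ∬_{Γ_{x₀}(c,v)} f(x,ξ,t) dx dξ dt = M`. -/
theorem mass_concentration_in_cones {n : ℕ} (hn : 2 ≤ n)
    (f g : EuclideanSpace ℝ (Fin n) → EuclideanSpace ℝ (Fin n) → ℝ → ℝ)
    (hf_nonneg : ∀ x ξ t, (0:ℝ) ≤ t → 0 ≤ f x ξ t)
    (hf_meas : Measurable fun p : (EuclideanSpace ℝ (Fin n) × EuclideanSpace ℝ (Fin n)) × ℝ =>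
      f p.1.1 p.1.2 p.2)
    (hg_meas : Measurable fun p : (EuclideanSpace ℝ (Fin n) × EuclideanSpace ℝ (Fin n)) × ℝ =>
      g p.1.1 p.1.2 p.2)
    -- mild solution along characteristics
    (h_mild : ∀ (x ξ : EuclideanSpace ℝ (Fin n)) (t : ℝ), 0 ≤ t →
      f (x + t • ξ) ξ t = f x ξ 0 + ∫ s in Icc (0:ℝ) t, g (x + s • ξ) ξ s)
    -- `g` is a mesoscopic interaction
    (hmeso_mass : ∀ (t : ℝ), 0 ≤ t → ∀ x, Integrable (fun ξ => g x ξ t) ∧ ∫ ξ, g x ξ t = 0)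
    (hmeso_mom : ∀ (t : ℝ), 0 ≤ t → ∀ x, Integrable (fun ξ => g x ξ t • ξ) ∧
      ∫ ξ, g x ξ t • ξ = (0 : EuclideanSpace ℝ (Fin n)))
    (hmeso_en : ∀ (t : ℝ), 0 ≤ t → ∀ x, Integrable (fun ξ => g x ξ t * ‖ξ‖ ^ 2) ∧
      ∫ ξ, g x ξ t * ‖ξ‖ ^ 2 = 0)
    -- finiteness of mass, energy and second moments at every time
    (hf_int : ∀ (t : ℝ), 0 ≤ t →
      Integrable (fun p : EuclideanSpace ℝ (Fin n) × EuclideanSpace ℝ (Fin n) =>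
        f p.1 p.2 t * (1 + ‖p.1‖ ^ 2 + ‖p.2‖ ^ 2)))
    -- integrability of the interaction along characteristics with second moments
    (hg_char_int : ∀ T : ℝ, 0 < T →
      Integrable (fun q : (EuclideanSpace ℝ (Fin n) × EuclideanSpace ℝ (Fin n)) × ℝ =>
        |g (q.1.1 + q.2 • q.1.2) q.1.2 q.2| * (1 + ‖q.1.1‖ ^ 2 + ‖q.1.2‖ ^ 2))
        ((volume : Measure (EuclideanSpace ℝ (Fin n) × EuclideanSpace ℝ (Fin n))).prod
          (volume.restrict (Icc (0:ℝ) T))))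
    -- the total energy
    (Energy : ℝ)
    (hE : Energy = ∫ p : EuclideanSpace ℝ (Fin n) × EuclideanSpace ℝ (Fin n),
      f p.1 p.2 0 * ‖p.2‖ ^ 2)
    -- localization of mass at time zero
    (hf_loc : Integrable (fun p : EuclideanSpace ℝ (Fin n) × EuclideanSpace ℝ (Fin n) =>
      f p.1 p.2 0 * ‖p.1‖ ^ 2))
    -- `f` is smooth enough for the integration by parts in the spatial variable
    (hf_smooth : ContDiff ℝ 1 (fun p : (EuclideanSpace ℝ (Fin n) × EuclideanSpace ℝ (Fin n)) × ℝ =>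
      f p.1.1 p.1.2 p.2))
    :
    ∀ x₀ : EuclideanSpace ℝ (Fin n), ∀ c v : ℝ, 0 < c → c < π / 2 → 0 < v →
      Tendsto (fun T : ℝ =>
          (∫ t in Ioc (0:ℝ) T,
            ∫ p in {p : EuclideanSpace ℝ (Fin n) × EuclideanSpace ℝ (Fin n) |
                ‖p.2‖ < v ∨ (p.2 ≠ 0 ∧ p.1 ≠ x₀ ∧ angle (p.1 - x₀) p.2 ∉ Icc c (π - c))},
              f p.1 p.2 t) / T)
        atTop
        (nhds (∫ p : EuclideanSpace ℝ (Fin n) × EuclideanSpace ℝ (Fin n), f p.1 p.2 0)) := by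
  intro x₀ c v hc hc2 hv
  set S : Set (EuclideanSpace ℝ (Fin n) × EuclideanSpace ℝ (Fin n)) :=
    {p | ‖p.2‖ < v ∨ (p.2 ≠ 0 ∧ p.1 ≠ x₀ ∧ angle (p.1 - x₀) p.2 ∉ Icc c (π - c))} with hS
  have hSm : MeasurableSet S := by
    have hang : Measurable fun p : EuclideanSpace ℝ (Fin n) × EuclideanSpace ℝ (Fin n) =>
        angle (p.1 - x₀) p.2 := by
      unfold angle
      fun_prop
    have hnorm : Measurable fun p : EuclideanSpace ℝ (Fin n) × EuclideanSpace ℝ (Fin n) =>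
        ‖p.2‖ := by fun_prop
    exact (measurableSet_lt hnorm measurable_const).union
      ((measurable_snd (measurableSet_singleton 0)).compl.inter
        ((measurable_fst (measurableSet_singleton x₀)).compl.inter
          (hang measurableSet_Icc).compl))
  have hslice : ∀ t : ℝ, Measurable
      fun p : EuclideanSpace ℝ (Fin n) × EuclideanSpace ℝ (Fin n) => f p.1 p.2 t := fun t =>
    hf_meas.comp (by fun_prop : Measurable fun p :
      EuclideanSpace ℝ (Fin n) × EuclideanSpace ℝ (Fin n) => (p, t))
  have hfi : ∀ t : ℝ, 0 ≤ t → Integrable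
      (fun p : EuclideanSpace ℝ (Fin n) × EuclideanSpace ℝ (Fin n) => f p.1 p.2 t) := fun t ht =>
    (hf_int t ht).mono' (hslice t).aestronglyMeasurable (Eventually.of_forall fun p => by
      have h0 := hf_nonneg p.1 p.2 t ht
      rw [Real.norm_eq_abs, abs_of_nonneg h0]
      nlinarith [mul_nonneg h0 (sq_nonneg ‖p.1‖), mul_nonneg h0 (sq_nonneg ‖p.2‖)])
  -- The two conservation laws: mass and transported second moment.
  have hmass : ∀ t : ℝ, 0 < t →
      ∫ p : EuclideanSpace ℝ (Fin n) × EuclideanSpace ℝ (Fin n), f p.1 p.2 t =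
        ∫ p : EuclideanSpace ℝ (Fin n) × EuclideanSpace ℝ (Fin n), f p.1 p.2 0 := by
    intro t ht
    have := (weighted_conservation f g hg_meas h_mild hg_char_int (fun _ => 1) measurable_const 1
      (fun y => by simp) (by simpa using hfi 0 le_rfl)
      (fun s hs x => by simpa using (hmeso_mass s hs x).2) t ht).2
    simpa using this
  have hwbound : ∀ y : EuclideanSpace ℝ (Fin n),
      ‖y - x₀‖ ^ 2 ≤ (2 + 2 * ‖x₀‖ ^ 2) * (1 + ‖y‖ ^ 2) := by
    intro y
    have h1 := norm_sub_le y x₀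
    have h2 : ‖y - x₀‖ ^ 2 ≤ (‖y‖ + ‖x₀‖) ^ 2 := by gcongr
    nlinarith [sq_nonneg (‖y‖ - ‖x₀‖), mul_nonneg (sq_nonneg ‖x₀‖) (sq_nonneg ‖y‖)]
  have hf0w : Integrable (fun p : EuclideanSpace ℝ (Fin n) × EuclideanSpace ℝ (Fin n) =>
      f p.1 p.2 0 * ‖p.1 - x₀‖ ^ 2) := by
    have hwm : Measurable fun p : EuclideanSpace ℝ (Fin n) × EuclideanSpace ℝ (Fin n) =>
        ‖p.1 - x₀‖ ^ 2 := by fun_prop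
    refine (((hfi 0 le_rfl).add hf_loc).const_mul (2 + 2 * ‖x₀‖ ^ 2)).mono'
      ((hslice 0).mul hwm).aestronglyMeasurable (Eventually.of_forall fun p => ?_)
    have h0 := hf_nonneg p.1 p.2 0 le_rfl
    rw [Real.norm_eq_abs, abs_of_nonneg (by positivity)]
    calc _ ≤ f p.1 p.2 0 * ((2 + 2 * ‖x₀‖ ^ 2) * (1 + ‖p.1‖ ^ 2)) := by
          gcongr
          exact hwbound _
      _ = _ := by
          simp only [Pi.add_apply]
          ring
  have hmom := weighted_conservation f g hg_meas h_mild hg_char_int (fun y => ‖y - x₀‖ ^ 2)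
      (by fun_prop) (2 + 2 * ‖x₀‖ ^ 2)
      (fun y => by
        rw [abs_of_nonneg (by positivity)]
        exact hwbound y) hf0w
      (fun s hs x => interaction_second_moment _ (hmeso_mass s hs x) (hmeso_mom s hs x)
        (hmeso_en s hs x) x x₀ s)
  set M := ∫ p : EuclideanSpace ℝ (Fin n) × EuclideanSpace ℝ (Fin n), f p.1 p.2 0 with hM
  set I := ∫ p : EuclideanSpace ℝ (Fin n) × EuclideanSpace ℝ (Fin n),
    f p.1 p.2 0 * ‖p.1 - x₀‖ ^ 2 with hI
  have hsplit : ∀ t : ℝ, 0 < t → (∫ p in S, f p.1 p.2 t) + ∫ p in Sᶜ, f p.1 p.2 t = M :=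
    fun t ht => (integral_add_compl hSm (hfi t ht.le)).trans (hmass t ht)
  have hcnonneg : ∀ t : ℝ, 0 < t → 0 ≤ ∫ p in Sᶜ, f p.1 p.2 t := fun t ht =>
    integral_nonneg fun p => hf_nonneg _ _ _ ht.le
  have hsnonneg : ∀ t : ℝ, 0 < t → 0 ≤ ∫ p in S, f p.1 p.2 t := fun t ht =>
    integral_nonneg fun p => hf_nonneg _ _ _ ht.le
  have hk : 0 < v ^ 2 * sin c ^ 2 := by
    have := sin_pos_of_pos_of_lt_pi hc (by linarith [pi_pos])
    positivity
  -- Chebyshev's inequality on the complement of the punctured blind cones.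
  have hcheb : ∀ t : ℝ, 0 < t →
      t ^ 2 * (v ^ 2 * sin c ^ 2) * ∫ p in Sᶜ, f p.1 p.2 t ≤ I := by
    intro t ht
    obtain ⟨hint, heq⟩ := hmom t ht
    rw [← heq, ← integral_const_mul]
    refine le_trans (setIntegral_mono_on ((hfi t ht.le).integrableOn.const_mul _)
      hint.integrableOn hSm.compl fun p hp => ?_)
      (setIntegral_le_integral hint (Eventually.of_forall fun p =>
        mul_nonneg (hf_nonneg _ _ _ ht.le) (by positivity)))
    simp only [hS, mem_compl_iff, Set.mem_ofPred_eq, not_or, not_lt] at hp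
    obtain ⟨hp1, hp2⟩ := hp
    have hne : p.2 ≠ 0 := norm_pos_iff.1 (hv.trans_le hp1)
    have hang : angle (p.1 - x₀) p.2 ∈ Icc c (π - c) := by
      by_contra hcon
      refine hp2 ⟨hne, ?_, hcon⟩
      -- At the observer itself the angle takes the conventional value `π / 2`.
      intro hx
      apply hcon
      rw [hx, sub_self, angle_zero_left]
      constructor <;> linarith
    have := dist_sq_lower_bound (p.1 - x₀) p.2 c v t hc hv hp1 hang
    have hrw : p.1 - t • p.2 - x₀ = p.1 - x₀ - t • p.2 := by abel
    rw [mul_comm, hrw]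
    exact mul_le_mul_of_nonneg_left this (hf_nonneg _ _ _ ht.le)
  refine tendsto_average_of_defect_le _ ?_ M (M + I / (v ^ 2 * sin c ^ 2)) ?_ ?_
  · have : Measurable fun q : ℝ × (EuclideanSpace ℝ (Fin n) × EuclideanSpace ℝ (Fin n)) =>
        f q.2.1 q.2.2 q.1 := hf_meas.comp measurable_swap
    exact (this.stronglyMeasurable.integral_prod_right (ν := volume.restrict S)).measurable
  · intro t ht
    linarith [hsplit t ht, hcnonneg t ht]
  · intro t ht
    have h1 := hsplit t ht
    have h2 : t ^ 2 * (∫ p in Sᶜ, f p.1 p.2 t) ≤ I / (v ^ 2 * sin c ^ 2) := by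
      rw [le_div_iff₀ hk]
      linarith [hcheb t ht]
    have h3 := hsnonneg t ht
    rw [← div_eq_mul_inv, le_div_iff₀ (by positivity)]
    have h4 : M - ∫ p in S, f p.1 p.2 t = ∫ p in Sᶜ, f p.1 p.2 t := by linarith
    rw [h4]
    linarith
end
end

section
/- (Scattering on compact sets) Suppose N := ‖f(·,·,0)‖_O + sup_{x,ξ} λ₀(x,ξ)⁻¹ ∫₀^∞ |g(x+tξ,ξ,t)| dt is finite, and that for every bounded D ⊆ ℝⁿ, sup_{x∈D, ξ} λ₀(x,ξ)⁻¹ ∫_z^∞ |g(x+tξ,ξ,t)| dt → 0 as z → ∞. Then the function f_∞(x,ξ) := f(x,ξ,0) + ∫₀^∞ g(x+sξ,ξ,s) ds is well defined, satisfies ‖f_∞‖_O ≤ N, and f scatters to f_∞ on compact sets: for every compact D ⊆ ℝⁿ, lim_{t→∞} sup_{x∈D, ξ∈ℝⁿ} |f(x+tξ,ξ,t) − f_∞(x,ξ)| / λ₀(x,ξ) = 0. Moreover f_∞ is the unique function with this convergence property. -/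
/-!
Along a characteristic, splitting the integral over `(0, ∞)` at time `t` shows that the difference
`f(x+tξ,ξ,t) - f_∞(x,ξ)` is minus the tail integral of `g` over `(t, ∞)`, so the uniform decay of
the weighted tails is exactly scattering. The bound on `f_∞` is the triangle inequality, and
uniqueness follows by testing convergence on the singletons `{x}`.
-/

open MeasureTheory Real Filter Set Bornology
open scoped RealInnerProductSpace ENNReal

noncomputable section

/-- Scattering on compact sets: if the weighted tail integrals of the
interaction along characteristics vanish uniformly on bounded spatial sets, then
`f_∞(x,ξ) = f(x,ξ,0) + ∫₀^∞ g(x+sξ,ξ,s) ds` satisfies `‖f_∞‖_O ≤ N` and `f` scatters to `f_∞`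
on every compact set `D`, and `f_∞` is the unique function with this property. -/
theorem scattering_on_compact_sets {n : ℕ} (hn : 1 ≤ n)
    -- a positive measurable weight defining the observer's norm
    (lam0 : EuclideanSpace ℝ (Fin n) → EuclideanSpace ℝ (Fin n) → ℝ)
    (hlam_meas : Measurable fun p : EuclideanSpace ℝ (Fin n) × EuclideanSpace ℝ (Fin n) =>
      lam0 p.1 p.2)
    (hlam_pos : ∀ x ξ, 0 < lam0 x ξ)
    (f g : EuclideanSpace ℝ (Fin n) → EuclideanSpace ℝ (Fin n) → ℝ → ℝ)
    (hf_nonneg : ∀ x ξ t, (0:ℝ) ≤ t → 0 ≤ f x ξ t)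
    (hf_meas : Measurable fun p : (EuclideanSpace ℝ (Fin n) × EuclideanSpace ℝ (Fin n)) × ℝ =>
      f p.1.1 p.1.2 p.2)
    (hg_meas : Measurable fun p : (EuclideanSpace ℝ (Fin n) × EuclideanSpace ℝ (Fin n)) × ℝ =>
      g p.1.1 p.1.2 p.2)
    -- mild solution along characteristics
    (h_mild : ∀ (x ξ : EuclideanSpace ℝ (Fin n)) (t : ℝ), 0 ≤ t →
      f (x + t • ξ) ξ t = f x ξ 0 + ∫ s in Icc (0:ℝ) t, g (x + s • ξ) ξ s)
    -- absolute integrability of the interaction along each characteristic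
    (hg_abs : ∀ (x ξ : EuclideanSpace ℝ (Fin n)),
      IntegrableOn (fun t => g (x + t • ξ) ξ t) (Ioi (0:ℝ)))
    -- `N = N₁ + N₂` is finite: `N₁` bounds `‖f(·,·,0)‖_O` and `N₂` bounds
    -- `sup_{x,ξ} λ₀(x,ξ)⁻¹ ∫₀^∞ |g(x+tξ,ξ,t)| dt`
    (N₁ N₂ : ℝ)
    (hN₁ : ∀ x ξ, |f x ξ 0| ≤ N₁ * lam0 x ξ)
    (hN₂ : ∀ x ξ, (∫ t in Ioi (0:ℝ), |g (x + t • ξ) ξ t|) ≤ N₂ * lam0 x ξ)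
    -- the scattering limit `f_∞(x,ξ) = f(x,ξ,0) + ∫₀^∞ g(x+sξ,ξ,s) ds` (well defined)
    (flim : EuclideanSpace ℝ (Fin n) → EuclideanSpace ℝ (Fin n) → ℝ)
    (hflim : ∀ x ξ, flim x ξ = f x ξ 0 + ∫ s in Ioi (0:ℝ), g (x + s • ξ) ξ s)
    -- the tails vanish uniformly on bounded spatial sets
    (h_decay : ∀ D : Set (EuclideanSpace ℝ (Fin n)), IsBounded D →
      ∀ ε : ℝ, 0 < ε → ∃ Z : ℝ, ∀ z : ℝ, Z ≤ z → ∀ x ∈ D, ∀ ξ,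
        (∫ t in Ioi z, |g (x + t • ξ) ξ t|) ≤ ε * lam0 x ξ) :
    -- `‖f_∞‖_O ≤ N`
    (∀ x ξ, |flim x ξ| ≤ (N₁ + N₂) * lam0 x ξ)
    -- `f` scatters to `f_∞` on compact sets
    ∧ (∀ D : Set (EuclideanSpace ℝ (Fin n)), IsCompact D →
        ∀ ε : ℝ, 0 < ε → ∃ T : ℝ, ∀ t : ℝ, T ≤ t → ∀ x ∈ D, ∀ ξ,
          |f (x + t • ξ) ξ t - flim x ξ| ≤ ε * lam0 x ξ)
    -- uniqueness of the scattering limit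
    ∧ (∀ h : EuclideanSpace ℝ (Fin n) → EuclideanSpace ℝ (Fin n) → ℝ,
        (∀ D : Set (EuclideanSpace ℝ (Fin n)), IsCompact D →
          ∀ ε : ℝ, 0 < ε → ∃ T : ℝ, ∀ t : ℝ, T ≤ t → ∀ x ∈ D, ∀ ξ,
            |f (x + t • ξ) ξ t - h x ξ| ≤ ε * lam0 x ξ) → h = flim) := by
  have tail_le : ∀ (x ξ : EuclideanSpace ℝ (Fin n)) (z : ℝ),
      |∫ t in Ioi z, g (x + t • ξ) ξ t| ≤ ∫ t in Ioi z, |g (x + t • ξ) ξ t| :=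
    fun x ξ z => abs_integral_le_integral_abs
  have scat : ∀ D : Set (EuclideanSpace ℝ (Fin n)), IsCompact D →
      ∀ ε : ℝ, 0 < ε → ∃ T : ℝ, ∀ t : ℝ, T ≤ t → ∀ x ∈ D, ∀ ξ,
        |f (x + t • ξ) ξ t - flim x ξ| ≤ ε * lam0 x ξ := by
    intro D hD ε hε
    obtain ⟨Z, hZ⟩ := h_decay D hD.isBounded ε hε
    -- the mild formulation is available for nonnegative times only
    refine ⟨max Z 0, fun t ht x hx ξ => ?_⟩
    have ht0 : 0 ≤ t := (le_max_right _ _).trans ht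
    have hsplit : (∫ s in Ioi (0:ℝ), g (x + s • ξ) ξ s)
        = (∫ s in Ioc (0:ℝ) t, g (x + s • ξ) ξ s) + ∫ s in Ioi t, g (x + s • ξ) ξ s := by
      rw [← Ioc_union_Ioi_eq_Ioi ht0]
      exact setIntegral_union (Ioc_disjoint_Ioi le_rfl) measurableSet_Ioi
        ((hg_abs x ξ).mono_set Ioc_subset_Ioi_self)
        ((hg_abs x ξ).mono_set (Ioi_subset_Ioi ht0))
    have htail : f (x + t • ξ) ξ t - flim x ξ = -∫ s in Ioi t, g (x + s • ξ) ξ s := by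
      rw [h_mild x ξ t ht0, hflim, hsplit, integral_Icc_eq_integral_Ioc]
      ring
    rw [htail, abs_neg]
    exact (tail_le x ξ t).trans (hZ t ((le_max_left _ _).trans ht) x hx ξ)
  refine ⟨fun x ξ => ?_, scat, fun h hh => ?_⟩
  · rw [hflim, add_mul]
    exact (abs_add_le _ _).trans (add_le_add (hN₁ x ξ) ((tail_le x ξ 0).trans (hN₂ x ξ)))
  · funext x ξ
    refine eq_of_abs_sub_le_all fun δ hδ => ?_
    have hl := hlam_pos x ξ
    -- `δ / (2 λ₀)` makes the two weighted errors at `(x, ξ)` add up to `δ`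
    have hε : 0 < δ / (2 * lam0 x ξ) := by positivity
    obtain ⟨T₁, h₁⟩ := scat {x} isCompact_singleton _ hε
    obtain ⟨T₂, h₂⟩ := hh {x} isCompact_singleton _ hε
    have e₁ := h₁ (max T₁ T₂) (le_max_left _ _) x rfl ξ
    have e₂ := h₂ (max T₁ T₂) (le_max_right _ _) x rfl ξ
    have hmul : δ / (2 * lam0 x ξ) * lam0 x ξ = δ / 2 := by field_simp
    rw [hmul, abs_le] at e₁ e₂
    exact abs_le.2 ⟨by linarith, by linarith⟩
end
end

section
/- (Uniform scattering) Suppose N := ‖f(·,·,0)‖_O + sup_{x,ξ} λ₀(x,ξ)⁻¹ ∫₀^∞ |g(x+tξ,ξ,t)| dt is finite, and that sup_{x,ξ} λ₀(x,ξ)⁻¹ ∫_z^∞ |g(x+tξ,ξ,t)| dt → 0 as z → ∞. Then the function f_∞(x,ξ) := f(x,ξ,0) + ∫₀^∞ g(x+sξ,ξ,s) ds satisfies ‖f_∞‖_O ≤ N, and f scatters uniformly to f_∞: lim_{t→∞} sup_{x,ξ∈ℝⁿ} |f(x+tξ,ξ,t) − f_∞(x,ξ)| / λ₀(x,ξ)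 = 0; f_∞ is the unique function with this property. -/
/-!
Subtracting the mild formulation from the definition of `flim` shows that, for `t ≥ 0`,
`f (x + t • ξ) ξ t - flim x ξ` is minus the tail integral of `g` over `(t, ∞)` along the
characteristic, so the uniform decay of the weighted tails gives uniform scattering.
The bound on `flim` is the triangle inequality, and uniqueness is uniqueness of limits at
each point `(x, ξ)`, where the weight is a fixed positive number.
-/

open MeasureTheory Real Filter Set Bornology
open scoped RealInnerProductSpace ENNReal

noncomputable section

/-- Uniform scattering: if the weighted tail integrals of the interaction
along characteristics vanish uniformly in `(x,ξ)`, then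
`f_∞(x,ξ) = f(x,ξ,0) + ∫₀^∞ g(x+sξ,ξ,s) ds` satisfies `‖f_∞‖_O ≤ N` and `f` scatters
uniformly to `f_∞`, which is the unique function with this property. -/
theorem uniform_scattering {n : ℕ} (hn : 1 ≤ n)
    -- a positive measurable weight defining the observer's norm
    (lam0 : EuclideanSpace ℝ (Fin n) → EuclideanSpace ℝ (Fin n) → ℝ)
    (hlam_meas : Measurable fun p : EuclideanSpace ℝ (Fin n) × EuclideanSpace ℝ (Fin n) =>
      lam0 p.1 p.2)
    (hlam_pos : ∀ x ξ, 0 < lam0 x ξ)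
    (f g : EuclideanSpace ℝ (Fin n) → EuclideanSpace ℝ (Fin n) → ℝ → ℝ)
    (hf_nonneg : ∀ x ξ t, (0:ℝ) ≤ t → 0 ≤ f x ξ t)
    (hf_meas : Measurable fun p : (EuclideanSpace ℝ (Fin n) × EuclideanSpace ℝ (Fin n)) × ℝ =>
      f p.1.1 p.1.2 p.2)
    (hg_meas : Measurable fun p : (EuclideanSpace ℝ (Fin n) × EuclideanSpace ℝ (Fin n)) × ℝ =>
      g p.1.1 p.1.2 p.2)
    -- mild solution along characteristics
    (h_mild : ∀ (x ξ : EuclideanSpace ℝ (Fin n)) (t : ℝ), 0 ≤ t →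
      f (x + t • ξ) ξ t = f x ξ 0 + ∫ s in Icc (0:ℝ) t, g (x + s • ξ) ξ s)
    -- absolute integrability of the interaction along each characteristic
    (hg_abs : ∀ (x ξ : EuclideanSpace ℝ (Fin n)),
      IntegrableOn (fun t => g (x + t • ξ) ξ t) (Ioi (0:ℝ)))
    -- `N = N₁ + N₂` is finite: `N₁` bounds `‖f(·,·,0)‖_O` and `N₂` bounds
    -- `sup_{x,ξ} λ₀(x,ξ)⁻¹ ∫₀^∞ |g(x+tξ,ξ,t)| dt`
    (N₁ N₂ : ℝ)
    (hN₁ : ∀ x ξ, |f x ξ 0| ≤ N₁ * lam0 x ξ)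
    (hN₂ : ∀ x ξ, (∫ t in Ioi (0:ℝ), |g (x + t • ξ) ξ t|) ≤ N₂ * lam0 x ξ)
    -- the scattering limit `f_∞(x,ξ) = f(x,ξ,0) + ∫₀^∞ g(x+sξ,ξ,s) ds` (well defined)
    (flim : EuclideanSpace ℝ (Fin n) → EuclideanSpace ℝ (Fin n) → ℝ)
    (hflim : ∀ x ξ, flim x ξ = f x ξ 0 + ∫ s in Ioi (0:ℝ), g (x + s • ξ) ξ s)
    -- the tails vanish uniformly in `(x, ξ)`
    (h_decay : ∀ ε : ℝ, 0 < ε → ∃ Z : ℝ, ∀ z : ℝ, Z ≤ z → ∀ x ξ,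
        (∫ t in Ioi z, |g (x + t • ξ) ξ t|) ≤ ε * lam0 x ξ) :
    -- `‖f_∞‖_O ≤ N`
    (∀ x ξ, |flim x ξ| ≤ (N₁ + N₂) * lam0 x ξ)
    -- `f` scatters uniformly to `f_∞`
    ∧ (∀ ε : ℝ, 0 < ε → ∃ T : ℝ, ∀ t : ℝ, T ≤ t → ∀ x ξ,
          |f (x + t • ξ) ξ t - flim x ξ| ≤ ε * lam0 x ξ)
    -- uniqueness of the uniform scattering limit
    ∧ (∀ h : EuclideanSpace ℝ (Fin n) → EuclideanSpace ℝ (Fin n) → ℝ,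
        (∀ ε : ℝ, 0 < ε → ∃ T : ℝ, ∀ t : ℝ, T ≤ t → ∀ x ξ,
            |f (x + t • ξ) ξ t - h x ξ| ≤ ε * lam0 x ξ) → h = flim) := by
  have hscat : ∀ ε : ℝ, 0 < ε → ∃ T : ℝ, ∀ t : ℝ, T ≤ t → ∀ x ξ,
      |f (x + t • ξ) ξ t - flim x ξ| ≤ ε * lam0 x ξ := by
    intro ε hε
    obtain ⟨Z, hZ⟩ := h_decay ε hε
    -- the mild formulation is only available for nonnegative times
    refine ⟨max Z 0, fun t ht x ξ => ?_⟩
    have ht0 : 0 ≤ t := (le_max_right _ _).trans ht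
    have hsplit : ∫ s in Ioi (0:ℝ), g (x + s • ξ) ξ s =
        (∫ s in Ioc (0:ℝ) t, g (x + s • ξ) ξ s) + ∫ s in Ioi t, g (x + s • ξ) ξ s := by
      rw [← Ioc_union_Ioi_eq_Ioi ht0]
      exact setIntegral_union Ioc_disjoint_Ioi_same measurableSet_Ioi
        ((hg_abs x ξ).mono_set Ioc_subset_Ioi_self)
        ((hg_abs x ξ).mono_set (Ioi_subset_Ioi ht0))
    have htail : f (x + t • ξ) ξ t - flim x ξ = -∫ s in Ioi t, g (x + s • ξ) ξ s := by
      rw [h_mild x ξ t ht0, hflim, integral_Icc_eq_integral_Ioc, hsplit]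
      ring
    rw [htail, abs_neg]
    exact abs_integral_le_integral_abs.trans (hZ t ((le_max_left _ _).trans ht) x ξ)
  refine ⟨fun x ξ => ?_, hscat, fun h hh => ?_⟩
  · rw [hflim, add_mul]
    exact (abs_add_le _ _).trans
      (add_le_add (hN₁ x ξ) (abs_integral_le_integral_abs.trans (hN₂ x ξ)))
  · funext x ξ
    refine eq_of_abs_sub_le_all fun δ hδ => ?_
    have hlam := hlam_pos x ξ
    -- each limit is within `δ / 2` of `f` at `(x, ξ)`, since `ε * lam0 x ξ = δ / 2`
    have hε : 0 < δ / (2 * lam0 x ξ) := by positivity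
    obtain ⟨T₁, hT₁⟩ := hscat _ hε
    obtain ⟨T₂, hT₂⟩ := hh _ hε
    have h₁ := hT₁ (max T₁ T₂) (le_max_left _ _) x ξ
    have h₂ := hT₂ (max T₁ T₂) (le_max_right _ _) x ξ
    have hhalf : δ / (2 * lam0 x ξ) * lam0 x ξ = δ / 2 := by field_simp
    rw [hhalf, abs_le] at h₁ h₂
    rw [abs_le]
    constructor <;> linarith [h₁.1, h₁.2, h₂.1, h₂.2]
end
end

section
/- (Gaussian collision-frequency estimates) (i) For every bounded D ⊆ ℝⁿ, every R > 0 with D ⊆ B(0,R), and every z > 1: Ω_D(z) ≤ ∫_{ℝⁿ} ∫_{z/log(z) − R}^{∞} e^{−s² − |ξ_*|²} ds dξ_* + V_n · (log z)^{−n} · ∫_{−R}^{∞} e^{−s²} ds < ∞, where V_n is the Lebesgue volume of the unit ball in ℝⁿ. (ii) Ω ≤ ∫_{−∞}^{∞} ∫_{ℝⁿ} e^{−s² − |ξ_*|²} dξ_* ds < ∞. -/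
/-! For fixed `x`, `ξ`, `ξs` put `v = ξ - ξs`. Projecting `x + s v` onto the direction of `v` and
substituting `t = s‖v‖ + ⟪x, v⟫/‖v‖` bounds the time integral
`∫_z^∞ e^{-‖x + s v‖²} ‖v‖ ds` by the one-dimensional Gaussian tail `∫_{z‖v‖ - ‖x‖}^∞ e^{-t²} dt`
(`ray_le`). Tonelli then turns both estimates into bounds for an integral of such tails against
`e^{-‖ξs‖²}` (`swap_le`). Extending every tail to the whole line gives the bound on `Ω`. For `Ω_D`,
where `‖x‖ < R`, the tail starts beyond `z / log z - R` if `‖v‖ ≥ 1 / log z`; the remaining `ξs`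
form a ball of radius `1 / log z`, on which the tail from `-R` and `e^{-‖ξs‖²} ≤ 1` suffice. -/

open MeasureTheory Real Filter Set
open scoped RealInnerProductSpace ENNReal

noncomputable section

/-- `Ω_D(z) = sup_{x∈D, ξ} ∫_z^∞ ∫_{ℝⁿ} e^{−|x+sξ−sξ⋆|²−|ξ⋆|²} |ξ−ξ⋆| dξ⋆ ds`. -/
def OmegaD {n : ℕ} (D : Set (EuclideanSpace ℝ (Fin n))) (z : ℝ) : ℝ≥0∞ :=
  ⨆ x ∈ D, ⨆ ξ : EuclideanSpace ℝ (Fin n),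
    ∫⁻ s in Ioi z, ∫⁻ ξs : EuclideanSpace ℝ (Fin n),
      ENNReal.ofReal (Real.exp (-‖x + s • ξ - s • ξs‖ ^ 2 - ‖ξs‖ ^ 2) * ‖ξ - ξs‖)

/-- `Ω = sup_{x, ξ} ∫_0^∞ ∫_{ℝⁿ} e^{−|x+sξ−sξ⋆|²−|ξ⋆|²} |ξ−ξ⋆| dξ⋆ ds`. -/
def Omega (n : ℕ) : ℝ≥0∞ :=
  ⨆ (x : EuclideanSpace ℝ (Fin n)) (ξ : EuclideanSpace ℝ (Fin n)),
    ∫⁻ s in Ioi (0:ℝ), ∫⁻ ξs : EuclideanSpace ℝ (Fin n),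
      ENNReal.ofReal (Real.exp (-‖x + s • ξ - s • ξs‖ ^ 2 - ‖ξs‖ ^ 2) * ‖ξ - ξs‖)

lemma integrable_gauss : Integrable (fun t : ℝ => Real.exp (-t ^ 2)) := by
  simpa using integrable_exp_neg_mul_sq (b := 1) one_pos

lemma integrable_gauss_norm {n : ℕ} :
    Integrable (fun v : EuclideanSpace ℝ (Fin n) => Real.exp (-‖v‖ ^ 2)) := by
  have h := (GaussianFourier.integrable_cexp_neg_mul_sq_norm_add (b := 1) (by simp) 0
    (0 : EuclideanSpace ℝ (Fin n))).norm
  refine h.congr (Eventually.of_forall fun v => ?_)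
  simp only [Complex.norm_exp]
  congr 1
  simp [← Complex.ofReal_pow]

/-- Integral along a ray. By Cauchy–Schwarz `‖x + s v‖²` is at least the square of the component
`s‖v‖ + ⟪x, v⟫/‖v‖` of `x + s v` along `v`; the factor `‖v‖` is the Jacobian of this affine
substitution, and the shift `⟪x, v⟫/‖v‖` is at least `-‖x‖`. -/
lemma ray_le {n : ℕ} (x v : EuclideanSpace ℝ (Fin n)) (z : ℝ) :
    ∫⁻ s in Ioi z, ENNReal.ofReal (Real.exp (-‖x + s • v‖ ^ 2) * ‖v‖) ≤
      ∫⁻ t in Ioi (z * ‖v‖ - ‖x‖), ENNReal.ofReal (Real.exp (-t ^ 2)) := by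
  rcases eq_or_ne v 0 with rfl | hv
  · simp
  have ha : 0 < ‖v‖ := norm_pos_iff.mpr hv
  set c : ℝ := ⟪x, v⟫ / ‖v‖ with hc
  have hcx : |c| ≤ ‖x‖ := by
    rw [hc, abs_div, abs_norm, div_le_iff₀ ha]
    exact abs_real_inner_le_norm x v
  have hsq : ∀ s : ℝ, (s * ‖v‖ + c) ^ 2 ≤ ‖x + s • v‖ ^ 2 := by
    intro s
    have h1 : c * ‖v‖ = ⟪x, v⟫ := by rw [hc]; field_simp
    have h2 : c ^ 2 ≤ ‖x‖ ^ 2 := sq_le_sq' (by linarith [(abs_le.mp hcx).1]) (abs_le.mp hcx).2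
    rw [norm_add_sq_real, inner_smul_right, norm_smul, mul_pow, Real.norm_eq_abs, sq_abs, ← h1]
    nlinarith
  calc _ ≤ ∫⁻ s in Ioi z, ENNReal.ofReal |‖v‖| *
            ENNReal.ofReal (Real.exp (-(s * ‖v‖ + c) ^ 2)) := by
        refine lintegral_mono fun s => ?_
        rw [← ENNReal.ofReal_mul (abs_nonneg _), abs_norm, mul_comm]
        gcongr ENNReal.ofReal (_ * Real.exp ?_)
        exact neg_le_neg (hsq s)
    _ = ∫⁻ t in (fun s => s * ‖v‖ + c) '' Ioi z, ENNReal.ofReal (Real.exp (-t ^ 2)) := by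
        symm
        refine lintegral_image_eq_lintegral_abs_deriv_mul measurableSet_Ioi (fun s _ => ?_)
          (fun s _ t _ h => ?_) _
        · simpa using (((hasDerivAt_id s).mul_const ‖v‖).add_const c).hasDerivWithinAt
        · simpa [ha.ne'] using h
    _ ≤ _ := by
        refine lintegral_mono_set ?_
        rintro _ ⟨s, hs, rfl⟩
        have : z * ‖v‖ < s * ‖v‖ := mul_lt_mul_of_pos_right hs ha
        simp only [mem_Ioi]
        linarith [(abs_le.mp hcx).1]

/-- The collision integral after Tonelli, with the time integral bounded by a Gaussian tail that
depends on `ξ` and `ξs` only through the relative speed `‖ξ - ξs‖`. -/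
lemma swap_le {n : ℕ} (x ξ : EuclideanSpace ℝ (Fin n)) (z : ℝ) :
    ∫⁻ s in Ioi z, ∫⁻ ξs : EuclideanSpace ℝ (Fin n),
      ENNReal.ofReal (Real.exp (-‖x + s • ξ - s • ξs‖ ^ 2 - ‖ξs‖ ^ 2) * ‖ξ - ξs‖) ≤
    ∫⁻ ξs : EuclideanSpace ℝ (Fin n), ENNReal.ofReal (Real.exp (-‖ξs‖ ^ 2)) *
      ∫⁻ t in Ioi (z * ‖ξ - ξs‖ - ‖x‖), ENNReal.ofReal (Real.exp (-t ^ 2)) := by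
  rw [lintegral_lintegral_swap (by
    refine Measurable.aemeasurable ?_
    simp only [Function.uncurry_def]
    fun_prop)]
  refine lintegral_mono fun ξs => ?_
  refine le_trans (le_of_eq ?_) (mul_le_mul_right (ray_le x (ξ - ξs) z) _)
  rw [← lintegral_const_mul' _ _ ENNReal.ofReal_ne_top]
  refine lintegral_congr fun s => ?_
  rw [← ENNReal.ofReal_mul (Real.exp_nonneg _), ← mul_assoc, ← Real.exp_add, smul_sub]
  rw [add_sub_assoc, sub_eq_neg_add (-_) (‖ξs‖ ^ 2)]

lemma ofReal_gauss (S : Set ℝ) : ∫⁻ t in S, ENNReal.ofReal (Real.exp (-t ^ 2)) =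
    ENNReal.ofReal (∫ t in S, Real.exp (-t ^ 2)) :=
  (ofReal_integral_eq_lintegral_ofReal integrable_gauss.integrableOn
    (Eventually.of_forall fun _ => Real.exp_nonneg _)).symm

lemma ofReal_gauss_norm {n : ℕ} :
    ∫⁻ v : EuclideanSpace ℝ (Fin n), ENNReal.ofReal (Real.exp (-‖v‖ ^ 2)) =
    ENNReal.ofReal (∫ v : EuclideanSpace ℝ (Fin n), Real.exp (-‖v‖ ^ 2)) :=
  (ofReal_integral_eq_lintegral_ofReal integrable_gauss_norm
    (Eventually.of_forall fun _ => Real.exp_nonneg _)).symm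

/-- Gaussian collision-frequency estimates:
(i) for every bounded `D ⊆ B(0,R)` and `z > 1`,
`Ω_D(z) ≤ ∬_{s ≥ z/log z − R} e^{−s²−|ξ⋆|²} + V_n (log z)^{−n} ∫_{−R}^∞ e^{−s²} < ∞`;
(ii) `Ω ≤ ∫_{−∞}^∞ ∫_{ℝⁿ} e^{−s²−|ξ⋆|²} dξ⋆ ds < ∞`. -/
theorem gaussian_collision_frequency {n : ℕ} (hn : 1 ≤ n) :
    (∀ D : Set (EuclideanSpace ℝ (Fin n)), Bornology.IsBounded D →
      ∀ R : ℝ, 0 < R → D ⊆ Metric.ball (0 : EuclideanSpace ℝ (Fin n)) R →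
      ∀ z : ℝ, 1 < z →
        OmegaD D z ≤ ENNReal.ofReal
          ((∫ ξs : EuclideanSpace ℝ (Fin n),
              ∫ s in Ioi (z / Real.log z - R), Real.exp (-s ^ 2 - ‖ξs‖ ^ 2))
            + (volume (Metric.ball (0 : EuclideanSpace ℝ (Fin n)) 1)).toReal
              * (1 / Real.log z ^ n) * ∫ s in Ioi (-R), Real.exp (-s ^ 2)))
    ∧ Omega n ≤ ENNReal.ofReal
        (∫ p : ℝ × EuclideanSpace ℝ (Fin n), Real.exp (-p.1 ^ 2 - ‖p.2‖ ^ 2)) := by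
  refine ⟨fun D _ R _ hD z hz => ?_, ?_⟩
  · have hlog : 0 < Real.log z := Real.log_pos hz
    refine iSup₂_le fun x hx => iSup_le fun ξ => (swap_le x ξ z).trans ?_
    have hxR : ‖x‖ < R := by simpa using hD hx
    set A : ℝ := ∫ t in Ioi (z / Real.log z - R), Real.exp (-t ^ 2) with hA
    set B : ℝ := ∫ t in Ioi (-R), Real.exp (-t ^ 2) with hB
    set G : ℝ := ∫ v : EuclideanSpace ℝ (Fin n), Real.exp (-‖v‖ ^ 2) with hG
    have hA0 : 0 ≤ A := integral_nonneg fun _ => Real.exp_nonneg _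
    have hB0 : 0 ≤ B := integral_nonneg fun _ => Real.exp_nonneg _
    have hG0 : 0 ≤ G := integral_nonneg fun _ => Real.exp_nonneg _
    have hAG : (∫ ξs : EuclideanSpace ℝ (Fin n),
        ∫ s in Ioi (z / Real.log z - R), Real.exp (-s ^ 2 - ‖ξs‖ ^ 2)) = G * A := by
      rw [hG, ← integral_mul_const]
      refine integral_congr_ae (Eventually.of_forall fun v => ?_)
      simp only [hA]
      rw [← integral_const_mul]
      simp only [sub_eq_add_neg, Real.exp_add, mul_comm]
    have hball : volume (Metric.ball ξ (1 / Real.log z)) = ENNReal.ofReal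
        ((volume (Metric.ball (0 : EuclideanSpace ℝ (Fin n)) 1)).toReal
          * (1 / Real.log z ^ n)) := by
      rw [Measure.addHaar_ball_of_pos _ _ (by positivity), finrank_euclideanSpace_fin, mul_comm,
        ENNReal.ofReal_mul ENNReal.toReal_nonneg,
        ENNReal.ofReal_toReal measure_ball_lt_top.ne, one_div_pow]
    calc _ ≤ ∫⁻ ξs : EuclideanSpace ℝ (Fin n),
            (ENNReal.ofReal (Real.exp (-‖ξs‖ ^ 2)) * ENNReal.ofReal A +
              (Metric.ball ξ (1 / Real.log z)).indicator (fun _ => ENNReal.ofReal B) ξs) := by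
          refine lintegral_mono fun ξs => ?_
          -- Slow relative velocities form a ball of small volume; fast ones push the tail of the
          -- time integral out to `z / log z - R`.
          by_cases hξ : ξs ∈ Metric.ball ξ (1 / Real.log z)
          · rw [indicator_of_mem hξ]
            refine le_add_left ?_
            have h1 : ENNReal.ofReal (Real.exp (-‖ξs‖ ^ 2)) ≤ 1 := by
              rw [ENNReal.ofReal_le_one, Real.exp_le_one_iff]
              nlinarith [sq_nonneg ‖ξs‖]
            rw [hB, ← ofReal_gauss, ← one_mul (∫⁻ t in Ioi (-R), _)]
            refine mul_le_mul' h1 (lintegral_mono_set (Ioi_subset_Ioi ?_))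
            nlinarith [norm_nonneg (ξ - ξs)]
          · refine le_add_right ?_
            rw [hA, ← ofReal_gauss]
            refine mul_le_mul' le_rfl (lintegral_mono_set (Ioi_subset_Ioi ?_))
            rw [Metric.mem_ball', dist_eq_norm, not_lt] at hξ
            have : z * (1 / Real.log z) ≤ z * ‖ξ - ξs‖ :=
              mul_le_mul_of_nonneg_left hξ (by linarith)
            rw [mul_one_div] at this
            linarith
      _ = _ := by
          rw [lintegral_add_right _ (measurable_const.indicator measurableSet_ball),
            lintegral_mul_const' _ _ ENNReal.ofReal_ne_top, ofReal_gauss_norm,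
            lintegral_indicator_const measurableSet_ball, hball, hAG,
            ENNReal.ofReal_add (by positivity) (by positivity), ENNReal.ofReal_mul hG0,
            mul_comm (ENNReal.ofReal B), ENNReal.ofReal_mul (q := B) (by positivity)]
  · refine iSup₂_le fun x ξ => (swap_le x ξ 0).trans ?_
    have hprod : (∫ p : ℝ × EuclideanSpace ℝ (Fin n), Real.exp (-p.1 ^ 2 - ‖p.2‖ ^ 2)) =
        (∫ t : ℝ, Real.exp (-t ^ 2)) *
          ∫ v : EuclideanSpace ℝ (Fin n), Real.exp (-‖v‖ ^ 2) := by
      rw [← integral_prod_mul, Measure.volume_eq_prod]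
      simp only [sub_eq_add_neg, Real.exp_add]
    rw [hprod, ENNReal.ofReal_mul (integral_nonneg fun _ => Real.exp_nonneg _),
      ← ofReal_gauss_norm, mul_comm, ← lintegral_mul_const' _ _ ENNReal.ofReal_ne_top]
    refine lintegral_mono fun ξs => mul_le_mul' le_rfl ?_
    rw [← setIntegral_univ, ← ofReal_gauss]
    exact lintegral_mono_set (subset_univ _)
end
end
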